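/- Let 0 < α < 1, (1−α)/2 < β < (1+α)/2, T > 0, b, σ : [0,∞) × ℝ → ℝ with b globally Lipschitz and σ ∈ C¹ with σ, σ'_t, σ'_x globally Lipschitz, and Z a real random variable. Then, with probability 1, the pathwise SDE X(t) = Z + ∫₀ᵗ b(τ, X(τ)) dτ + ∫₀ᵗ σ(τ, X(τ)) dξ_α(τ) (integrals understood pathwise as Young–Stieltjes integrals against the fBm path) has a unique solution in C^β([0,T]). -/

import Mathlib

open MeasureTheory ProbabilityTheory Set Finset intervalIntegral

/-- Left-endpoint Riemann–Stieltjes sum. -/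
noncomputable def RSsum (f g : ℝ → ℝ) (n : ℕ) (t : Fin (n + 1) → ℝ) : ℝ :=
  ∑ i : Fin n, f (t i.castSucc) * (g (t i.succ) - g (t i.castSucc))

/-- `I` is the (Young–)Riemann–Stieltjes integral `∫_a^b f dg`. -/
def IsRSIntegral (f g : ℝ → ℝ) (a b I : ℝ) : Prop :=
  ∀ ε > 0, ∃ δ > 0, ∀ (n : ℕ) (t : Fin (n + 1) → ℝ),
    Monotone t → t 0 = a → t (Fin.last n) = b →
    (∀ i : Fin n, t i.succ - t i.castSucc < δ) →
    |RSsum f g n t - I| < ε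

/-- Fractional Brownian motion with exponent `α` and constant `C`. -/
def IsFBM {Ω : Type*} [MeasurableSpace Ω] (P : Measure Ω)
    (ξ : ℝ → Ω → ℝ) (α C : ℝ) : Prop :=
  (∀ t : ℝ, Measurable (ξ t)) ∧
  ∀ (n : ℕ) (t : Fin n → ℝ), (∀ i, 0 ≤ t i) → ∀ c : Fin n → ℝ,
    Measure.map (fun ω => ∑ i, c i * ξ (t i) ω) P =
      gaussianReal 0
        (∑ i, ∑ j, c i * c j *
          (C * ((t i) ^ (1 + α) + (t j) ^ (1 + α) - |t i - t j| ^ (1 + α)))).toNNReal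

/-- `x` is a pathwise solution (for the sample point `ω`) of the SDE
`X(t) = Z + ∫₀ᵗ b(τ,X(τ)) dτ + ∫₀ᵗ σ(τ,X(τ)) dξ_α(τ)` in `C^β([0,T])`. -/
def IsPathwiseSolution {Ω : Type*} (b σ : ℝ → ℝ → ℝ) (ξ : ℝ → Ω → ℝ)
    (Z : Ω → ℝ) (T β : ℝ) (ω : Ω) (x : ℝ → ℝ) : Prop :=
  (∃ Cx : ℝ, ∀ t₁ ∈ Icc (0 : ℝ) T, ∀ t₂ ∈ Icc (0 : ℝ) T,
      |x t₂ - x t₁| ≤ Cx * |t₂ - t₁| ^ β) ∧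
  ∀ t ∈ Icc (0 : ℝ) T, ∃ I : ℝ,
    IsRSIntegral (fun τ => σ τ (x τ)) (fun τ => ξ τ ω) 0 t I ∧
    x t = Z ω + (∫ τ in (0 : ℝ)..t, b τ (x τ)) + I

/-!
Solutions are produced and compared pathwise, for a fixed driving path `g` that is `γ`-Hölder with
`γ > 1/2`; by the Kolmogorov–Chentsov chaining argument almost every fractional Brownian path is
such a path for every `γ < (1 + α) / 2`, because the increments are Gaussian with variance
proportional to `|t - s| ^ (1 + α)`.

Freezing the coefficients at the left endpoint of an interval of length `d` costs an error of order
`d ^ (2γ)`. As `2γ > 1`, these errors can be summed over nested bisections of the interval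
(Young's sewing argument), so that Euler polygons satisfy a local error estimate which does not
depend on the partition. It survives in the limit of vanishing mesh, and it forces the limit to
satisfy the integral equation, since the integral `∫ σ(τ, x τ) dg(τ)` is determined by its local
expansion `σ(s, x s) (g t - g s) + O((t - s) ^ (2γ))`.

For uniqueness, the Young–Loève estimate first upgrades a `β`-Hölder solution to a `γ`-Hölder one
(here `β + γ > 1` is used). Applied to the difference of two solutions on a short interval, it then
bounds the Hölder constant of the difference by half of itself.
-/

open Filter Topology
open scoped NNReal ENNReal

section HolderBounds

lemma rpow_add_le_mul_rpow {d T p q : ℝ} (hd : 0 ≤ d) (hdT : d ≤ T) (hp : 0 ≤ p) (hq : 0 ≤ q) :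
    d ^ (p + q) ≤ T ^ p * d ^ q := by
  rw [Real.rpow_add_of_nonneg hd hp hq]
  gcongr

lemma le_rpow_mul_rpow {d T γ : ℝ} (hd : 0 ≤ d) (hdT : d ≤ T) (hγ : 0 ≤ γ) (hγ1 : γ ≤ 1) :
    d ≤ T ^ (1 - γ) * d ^ γ := by
  simpa using rpow_add_le_mul_rpow hd hdT (sub_nonneg.2 hγ1) hγ

lemma exists_pos_le_one_mul_rpow_le (C : ℝ) {γ ε : ℝ} (hγ : 0 < γ) (hε : 0 < ε) :
    ∃ h : ℝ, 0 < h ∧ h ≤ 1 ∧ C * h ^ γ ≤ ε := by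
  set h₀ : ℝ := (ε / (|C| + 1)) ^ γ⁻¹
  refine ⟨min 1 h₀, by positivity, min_le_left _ _, ?_⟩
  calc C * min 1 h₀ ^ γ ≤ (|C| + 1) * h₀ ^ γ := by
        gcongr
        · linarith [le_abs_self C]
        · exact min_le_right _ _
    _ = ε := by
        rw [Real.rpow_inv_rpow (by positivity) hγ.ne']
        field_simp

/-- `f` is Hölder of exponent `γ` with constant `K` on `s`: the variant of Mathlib's `HolderOnWith`
with real `K` and `γ`. -/
def HolderBoundOn (K γ : ℝ) (f : ℝ → ℝ) (s : Set ℝ) : Prop :=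
  ∀ t₁ ∈ s, ∀ t₂ ∈ s, |f t₂ - f t₁| ≤ K * |t₂ - t₁| ^ γ

namespace HolderBoundOn

variable {f g : ℝ → ℝ} {K K' β γ a b : ℝ} {s s' : Set ℝ}

lemma of_lt (hγ : γ ≠ 0)
    (h : ∀ t₁ ∈ s, ∀ t₂ ∈ s, t₁ < t₂ → |f t₂ - f t₁| ≤ K * (t₂ - t₁) ^ γ) :
    HolderBoundOn K γ f s := by
  intro t₁ h₁ t₂ h₂
  rcases lt_trichotomy t₁ t₂ with hlt | rfl | hlt
  · rw [abs_of_pos (sub_pos.2 hlt)]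
    exact h t₁ h₁ t₂ h₂ hlt
  · simp [Real.zero_rpow hγ]
  · rw [abs_sub_comm, abs_sub_comm t₂, abs_of_pos (sub_pos.2 hlt)]
    exact h t₂ h₂ t₁ h₁ hlt

lemma le (hf : HolderBoundOn K γ f s) {t₁ t₂ : ℝ} (h₁ : t₁ ∈ s) (h₂ : t₂ ∈ s) (hle : t₁ ≤ t₂) :
    |f t₂ - f t₁| ≤ K * (t₂ - t₁) ^ γ := by
  simpa only [abs_of_nonneg (sub_nonneg.2 hle)] using hf t₁ h₁ t₂ h₂

lemma mono (hf : HolderBoundOn K γ f s) (hss : s' ⊆ s) : HolderBoundOn K γ f s' :=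
  fun t₁ h₁ t₂ h₂ ↦ hf t₁ (hss h₁) t₂ (hss h₂)

lemma mono_const (hf : HolderBoundOn K γ f s) (hK : K ≤ K') : HolderBoundOn K' γ f s :=
  fun t₁ h₁ t₂ h₂ ↦ (hf t₁ h₁ t₂ h₂).trans (by gcongr)

lemma sub (hf : HolderBoundOn K γ f s) (hg : HolderBoundOn K' γ g s) :
    HolderBoundOn (K + K') γ (fun t ↦ f t - g t) s := by
  intro t₁ h₁ t₂ h₂
  calc |f t₂ - g t₂ - (f t₁ - g t₁)| ≤ |f t₂ - f t₁| + |g t₂ - g t₁| := by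
        rw [sub_sub_sub_comm]
        exact abs_sub _ _
    _ ≤ (K + K') * |t₂ - t₁| ^ γ := by
        rw [add_mul]
        exact add_le_add (hf t₁ h₁ t₂ h₂) (hg t₁ h₁ t₂ h₂)

lemma continuousOn (hf : HolderBoundOn K γ f s) (hγ : 0 < γ) : ContinuousOn f s := by
  intro t₀ h₀
  refine tendsto_iff_dist_tendsto_zero.2 (squeeze_zero' (Eventually.of_forall fun _ ↦ dist_nonneg)
    (eventually_mem_nhdsWithin.mono fun t ht ↦ hf t₀ h₀ t ht) ?_)
  have hmod : Continuous fun t ↦ K * |t - t₀| ^ γ :=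
    continuous_const.mul ((by fun_prop : Continuous fun t ↦ |t - t₀|).rpow_const fun _ ↦ .inr hγ.le)
  simpa [Real.zero_rpow hγ.ne'] using (hmod.tendsto t₀).mono_left nhdsWithin_le_nhds

lemma mono_exponent (hf : HolderBoundOn K γ f (Icc a b)) (hK : 0 ≤ K) (hβ : 0 ≤ β)
    (hβγ : β ≤ γ) : HolderBoundOn (K * (b - a) ^ (γ - β)) β f (Icc a b) := by
  intro t₁ h₁ t₂ h₂
  calc |f t₂ - f t₁| ≤ K * |t₂ - t₁| ^ (γ - β + β) := by simpa using hf t₁ h₁ t₂ h₂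
    _ ≤ K * ((b - a) ^ (γ - β) * |t₂ - t₁| ^ β) := by
        gcongr
        exact rpow_add_le_mul_rpow (abs_nonneg _) (Real.dist_le_of_mem_Icc h₂ h₁)
          (sub_nonneg.2 hβγ) hβ
    _ = _ := by ring

lemma of_local_of_bounded {h M : ℝ} (hh : 0 < h) (hγ : 0 < γ) (hK : 0 ≤ K)
    (hloc : ∀ t₁ ∈ s, ∀ t₂ ∈ s, t₁ < t₂ → t₂ - t₁ ≤ h → |f t₂ - f t₁| ≤ K * (t₂ - t₁) ^ γ)
    (hM : ∀ t ∈ s, |f t| ≤ M) : HolderBoundOn (K + 2 * M / h ^ γ) γ f s := by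
  refine of_lt hγ.ne' fun t₁ h₁ t₂ h₂ hlt ↦ ?_
  have : 0 ≤ t₂ - t₁ := (sub_pos.2 hlt).le
  have hM0 : 0 ≤ M := (abs_nonneg _).trans (hM t₁ h₁)
  rcases le_total (t₂ - t₁) h with hnear | hfar
  · refine (hloc t₁ h₁ t₂ h₂ hlt hnear).trans ?_
    gcongr
    exact le_add_of_nonneg_right (by positivity)
  · calc |f t₂ - f t₁| ≤ |f t₂| + |f t₁| := abs_sub _ _
      _ ≤ 2 * M / h ^ γ * h ^ γ := by
          rw [div_mul_cancel₀ _ (by positivity)]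
          linarith [hM t₁ h₁, hM t₂ h₂]
      _ ≤ (K + 2 * M / h ^ γ) * (t₂ - t₁) ^ γ := by
          gcongr
          exact le_add_of_nonneg_left hK

lemma eq_const_of_halving (hK : 0 ≤ K) (hf : HolderBoundOn K γ f s)
    (hhalf : ∀ m, 0 ≤ m → HolderBoundOn m γ f s → HolderBoundOn (m / 2) γ f s) {t₁ t₂ : ℝ}
    (h₁ : t₁ ∈ s) (h₂ : t₂ ∈ s) : f t₂ = f t₁ := by
  have hiter (n : ℕ) : HolderBoundOn (K / 2 ^ n) γ f s := by
    induction n with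
    | zero => simpa using hf
    | succ n ih =>
      rw [pow_succ, ← div_div]
      exact hhalf _ (by positivity) ih
  have hlim : Tendsto (fun n : ℕ ↦ K / 2 ^ n * |t₂ - t₁| ^ γ) atTop (𝓝 (0 * |t₂ - t₁| ^ γ)) :=
    (tendsto_const_nhds.div_atTop (tendsto_pow_atTop_atTop_of_one_lt one_lt_two)).mul_const _
  rw [zero_mul] at hlim
  have := ge_of_tendsto' hlim fun n ↦ hiter n t₁ h₁ t₂ h₂
  exact sub_eq_zero.1 (abs_nonpos_iff.1 this)

end HolderBoundOn

end HolderBounds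

section Partitions

lemma exists_partition {a b δ : ℝ} (hab : a ≤ b) (hδ : 0 < δ) :
    ∃ (u : ℕ → ℝ) (N : ℕ), Monotone u ∧ u 0 = a ∧ u N = b ∧ (∀ k, u k ∈ Icc a b) ∧
      ∀ k, u (k + 1) - u k ≤ δ := by
  have hmono := Set.Icc.monotone_addNSMul hab hδ.le
  obtain ⟨N, hN⟩ := Set.Icc.addNSMul_eq_right hab hδ
  refine ⟨fun k ↦ Set.Icc.addNSMul hab δ k, N, fun i j hij ↦ hmono hij,
    Set.Icc.addNSMul_zero hab, hN N le_rfl, fun k ↦ Subtype.property _, fun k ↦ ?_⟩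
  exact (le_abs_self _).trans <|
    Set.Icc.abs_sub_addNSMul_le hab hδ.le k ⟨hmono k.le_succ, le_rfl⟩

lemma exists_le_le_succ_of_mem_Icc {u : ℕ → ℝ} (hu : Monotone u) {i k : ℕ} (hik : i < k) {t : ℝ}
    (ht : t ∈ Icc (u i) (u k)) : ∃ m, i ≤ m ∧ m < k ∧ u m ≤ t ∧ t ≤ u (m + 1) := by
  rcases ht.1.eq_or_lt with rfl | hlt
  · exact ⟨i, le_rfl, hik, le_rfl, hu i.le_succ⟩
  · have hmem : t ∈ ⋃ m ∈ Set.Ico i k, Set.Ioc (u m) (u (Order.succ m)) := by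
      rw [hu.biUnion_Ico_Ioc_map_succ]
      exact ⟨hlt, ht.2⟩
    simp only [mem_iUnion] at hmem
    obtain ⟨m, hm, htm⟩ := hmem
    exact ⟨m, hm.1, hm.2, htm.1.le, htm.2⟩

/- The interval `[u i, u k]` is bisected: dropping the partition step that contains its midpoint
leaves two blocks of at most half the length, to which induction on `k - i` applies. -/
theorem discrete_sewing {u : ℕ → ℝ} {E : ℕ → ℕ → ℝ} {w : ℕ → ℝ} {K Q ρ θ h : ℝ}
    (hu : Monotone u) (hw : ∀ i, 0 ≤ w i) (hK : 0 ≤ K) (hθ : 0 ≤ θ)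
    (hKQ : (1 + ρ) * (1 / 2) ^ θ * K + Q ≤ K) (hE : ∀ i, E i i = 0)
    (hstep : ∀ i m k, i ≤ m → m < k → u k - u i ≤ h → |E i m| ≤ K * w i * (u m - u i) ^ θ →
      w (m + 1) ≤ ρ * w i ∧ |E i k - E i m - E (m + 1) k| ≤ Q * w i * (u k - u i) ^ θ)
    {i k : ℕ} (hik : i ≤ k) (hh : u k - u i ≤ h) : |E i k| ≤ K * w i * (u k - u i) ^ θ := by
  induction hn : k - i using Nat.strong_induction_on generalizing i k with | _ n ih
  have hd : 0 ≤ u k - u i := sub_nonneg.2 (hu hik)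
  rcases hik.eq_or_lt with rfl | hlt
  · rw [hE, abs_zero]
    exact mul_nonneg (mul_nonneg hK (hw i)) (Real.rpow_nonneg hd θ)
  obtain ⟨m, him, hmk, hm, hm'⟩ := exists_le_le_succ_of_mem_Icc hu hlt
    (t := (u i + u k) / 2) ⟨by linarith, by linarith⟩
  have hleft := ih (m - i) (by omega) him (by linarith) rfl
  have hright := ih (k - (m + 1)) (by omega) hmk (by linarith) rfl
  obtain ⟨hwρ, hdefect⟩ := hstep i m k him hmk hh hleft
  have hhalf : ((u k - u i) / 2) ^ θ = (1 / 2) ^ θ * (u k - u i) ^ θ := by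
    rw [← Real.mul_rpow (by norm_num) hd, one_div_mul_eq_div]
  have hleft' : |E i m| ≤ K * w i * ((1 / 2) ^ θ * (u k - u i) ^ θ) := by
    rw [← hhalf]
    refine hleft.trans ?_
    have := hw i
    have := sub_nonneg.2 (hu him)
    gcongr
    linarith
  have hright' : |E (m + 1) k| ≤ K * (ρ * w i) * ((1 / 2) ^ θ * (u k - u i) ^ θ) := by
    rw [← hhalf]
    refine hright.trans ?_
    have := (hw (m + 1)).trans hwρ
    have := sub_nonneg.2 (hu (Nat.succ_le_iff.2 hmk))
    gcongr
    linarith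
  calc |E i k| = |(E i k - E i m - E (m + 1) k) + E i m + E (m + 1) k| := by ring_nf
    _ ≤ |E i k - E i m - E (m + 1) k| + |E i m| + |E (m + 1) k| := abs_add_three _ _ _
    _ ≤ ((1 + ρ) * (1 / 2) ^ θ * K + Q) * (w i * (u k - u i) ^ θ) := by linarith
    _ ≤ K * (w i * (u k - u i) ^ θ) := by
        have := hw i
        gcongr
    _ = K * w i * (u k - u i) ^ θ := by ring

end Partitions

section RiemannStieltjes

variable {f g : ℝ → ℝ} {a b s t I : ℝ}

/-- The left-endpoint Riemann–Stieltjes sum of `f` against `g` over the first `n` steps of the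
sequence `u`: the counterpart of `RSsum` for partitions indexed by `ℕ`. -/
def stieltjesSum (f g : ℝ → ℝ) (u : ℕ → ℝ) (n : ℕ) : ℝ :=
  ∑ k ∈ Finset.range n, f (u k) * (g (u (k + 1)) - g (u k))

lemma RSsum_eq_stieltjesSum (f g : ℝ → ℝ) (n : ℕ) (t : Fin (n + 1) → ℝ) {u : ℕ → ℝ}
    (hu : ∀ i : Fin (n + 1), u i = t i) : RSsum f g n t = stieltjesSum f g u n := by
  rw [RSsum, stieltjesSum, Finset.sum_range]
  refine Finset.sum_congr rfl fun i _ ↦ ?_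
  simp only [← hu, Fin.val_castSucc, Fin.val_succ]

lemma isRSIntegral_iff_stieltjesSum : IsRSIntegral f g a b I ↔ ∀ ε > 0, ∃ δ > 0,
    ∀ (u : ℕ → ℝ) (n : ℕ), Monotone u → u 0 = a → u n = b →
      (∀ k < n, u (k + 1) - u k < δ) → |stieltjesSum f g u n - I| < ε := by
  constructor <;> intro h ε hε <;> obtain ⟨δ, hδ, hI⟩ := h ε hε <;> refine ⟨δ, hδ, ?_⟩
  · intro u n hu h0 hn hstep
    rw [← RSsum_eq_stieltjesSum f g n (fun i ↦ u i) fun _ ↦ rfl]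
    exact hI n _ (fun i j hij ↦ hu hij) h0 hn fun i ↦ hstep i i.isLt
  · intro n t ht h0 hn hstep
    set u : ℕ → ℝ := fun k ↦ t ⟨min k n, by omega⟩
    have hu (i : Fin (n + 1)) : u i = t i :=
      congrArg t (Fin.ext (min_eq_left (Nat.le_of_lt_succ i.isLt)))
    have humono : Monotone u := fun i j hij ↦ ht (Fin.mk_le_mk.2 (min_le_min_right n hij))
    rw [RSsum_eq_stieltjesSum f g n t hu]
    refine hI u n humono (h0 ▸ hu 0) (hn ▸ hu (Fin.last n)) fun k hk ↦ ?_
    simpa only [← hu, Fin.val_succ, Fin.val_castSucc] using hstep ⟨k, hk⟩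

lemma exists_stieltjesSum_concat (f g : ℝ → ℝ) {u v : ℕ → ℝ} (hu : Monotone u) (hv : Monotone v)
    {n : ℕ} (huv : u n = v 0) : ∃ w : ℕ → ℝ, Monotone w ∧ (∀ k ≤ n, w k = u k) ∧
      (∀ k, w (n + k) = v k) ∧
      ∀ m, stieltjesSum f g w (n + m) = stieltjesSum f g u n + stieltjesSum f g v m := by
  set w : ℕ → ℝ := fun k ↦ if k ≤ n then u k else v (k - n)
  have hwu : ∀ k ≤ n, w k = u k := fun k hk ↦ if_pos hk
  have hwv (k : ℕ) : w (n + k) = v k := by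
    rcases k.eq_zero_or_pos with rfl | hk
    · simpa [w] using huv
    · simp [w, hk.ne']
  refine ⟨w, monotone_nat_of_le_succ fun k ↦ ?_, hwu, hwv, fun m ↦ ?_⟩
  · rcases lt_or_ge k n with hk | hk
    · rw [hwu k hk.le, hwu (k + 1) hk]
      exact hu k.le_succ
    · obtain ⟨j, rfl⟩ := Nat.exists_eq_add_of_le hk
      rw [add_assoc, hwv, hwv]
      exact hv j.le_succ
  · rw [stieltjesSum, Finset.sum_range_add]
    congr 1
    · refine Finset.sum_congr rfl fun k hk ↦ ?_
      have hkn := Finset.mem_range.1 hk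
      rw [hwu k hkn.le, hwu (k + 1) hkn]
    · refine Finset.sum_congr rfl fun k _ ↦ ?_
      rw [add_assoc, hwv, hwv]

namespace IsRSIntegral

lemma sub {f₁ f₂ : ℝ → ℝ} {I₁ I₂ : ℝ} (h₁ : IsRSIntegral f₁ g a b I₁)
    (h₂ : IsRSIntegral f₂ g a b I₂) :
    IsRSIntegral (fun t ↦ f₁ t - f₂ t) g a b (I₁ - I₂) := by
  intro ε hε
  obtain ⟨δ₁, hδ₁, hI₁⟩ := h₁ (ε / 2) (half_pos hε)
  obtain ⟨δ₂, hδ₂, hI₂⟩ := h₂ (ε / 2) (half_pos hε)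
  refine ⟨min δ₁ δ₂, lt_min hδ₁ hδ₂, fun n t hm h0 hn hstep ↦ ?_⟩
  have hlt₁ := hI₁ n t hm h0 hn fun i ↦ (hstep i).trans_le (min_le_left _ _)
  have hlt₂ := hI₂ n t hm h0 hn fun i ↦ (hstep i).trans_le (min_le_right _ _)
  have hsum : RSsum (fun t ↦ f₁ t - f₂ t) g n t = RSsum f₁ g n t - RSsum f₂ g n t := by
    simp only [RSsum, sub_mul, Finset.sum_sub_distrib]
  rw [hsum, sub_sub_sub_comm]
  linarith [abs_sub (RSsum f₁ g n t - I₁) (RSsum f₂ g n t - I₂)]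

lemma eq_zero (h : IsRSIntegral f g a a I) : I = 0 := by
  refine abs_nonpos_iff.1 (le_of_forall_pos_lt_add fun ε hε ↦ ?_)
  obtain ⟨δ, -, hI⟩ := h ε hε
  simpa [RSsum] using hI 0 (fun _ ↦ a) monotone_const rfl rfl fun i ↦ i.elim0

lemma exists_partition_abs_stieltjesSum_sub_lt (h : IsRSIntegral f g a b I) (hab : a ≤ b) {ε δ : ℝ}
    (hε : 0 < ε) (hδ : 0 < δ) : ∃ (u : ℕ → ℝ) (n : ℕ), Monotone u ∧ u 0 = a ∧ u n = b ∧
      (∀ k, u k ∈ Icc a b) ∧ (∀ k, u (k + 1) - u k < δ) ∧ |stieltjesSum f g u n - I| < ε := by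
  obtain ⟨δ', hδ', hI⟩ := isRSIntegral_iff_stieltjesSum.1 h ε hε
  obtain ⟨u, n, hu, h0, hn, hmem, hstep⟩ := exists_partition hab (half_pos (lt_min hδ hδ'))
  have hstep' (k : ℕ) : u (k + 1) - u k < min δ δ' :=
    (hstep k).trans_lt (half_lt_self (lt_min hδ hδ'))
  exact ⟨u, n, hu, h0, hn, hmem, fun k ↦ (hstep' k).trans_le (min_le_left _ _),
    hI u n hu h0 hn fun k _ ↦ (hstep' k).trans_le (min_le_right _ _)⟩

lemma sub_left {I₁ I₂ : ℝ} (h₁ : IsRSIntegral f g a s I₁) (h₂ : IsRSIntegral f g a t I₂)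
    (has : a ≤ s) : IsRSIntegral f g s t (I₂ - I₁) := by
  rw [isRSIntegral_iff_stieltjesSum]
  intro ε hε
  obtain ⟨δ, hδ, hI₂⟩ := isRSIntegral_iff_stieltjesSum.1 h₂ (ε / 2) (half_pos hε)
  obtain ⟨u, m, hu, hu0, hum, -, hustep, hI₁⟩ :=
    h₁.exists_partition_abs_stieltjesSum_sub_lt has (half_pos hε) hδ
  refine ⟨δ, hδ, fun v n hv hv0 hvn hvstep ↦ ?_⟩
  obtain ⟨w, hw, hwu, hwv, hsum⟩ := exists_stieltjesSum_concat f g hu hv (hum.trans hv0.symm)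
  have hwstep : ∀ k < m + n, w (k + 1) - w k < δ := by
    intro k hk
    rcases lt_or_ge k m with hkm | hkm
    · rw [hwu k hkm.le, hwu (k + 1) hkm]
      exact hustep k
    · obtain ⟨j, rfl⟩ := Nat.exists_eq_add_of_le hkm
      rw [add_assoc, hwv, hwv]
      exact hvstep j (by omega)
  have hlt := hI₂ w (m + n) hw ((hwu 0 m.zero_le).trans hu0) ((hwv n).trans hvn) hwstep
  rw [hsum] at hlt
  calc |stieltjesSum f g v n - (I₂ - I₁)|
      = |(stieltjesSum f g u m + stieltjesSum f g v n - I₂) - (stieltjesSum f g u m - I₁)| := by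
        ring_nf
    _ ≤ _ := abs_sub _ _
    _ < ε := by linarith

end IsRSIntegral

/-- For partitions of mesh `δ`, the Riemann–Stieltjes sums telescope to `y b - y a` up to an error
`K * (b - a) * δ ^ (θ - 1)`. -/
theorem isRSIntegral_of_local_expansion {y : ℝ → ℝ} {K θ h : ℝ} (hK : 0 ≤ K) (hθ : 1 < θ)
    (hh : 0 < h) (hy : ∀ s ∈ Icc a b, ∀ t ∈ Icc a b, s ≤ t → t - s ≤ h →
      |y t - y s - f s * (g t - g s)| ≤ K * (t - s) ^ θ) :
    IsRSIntegral f g a b (y b - y a) := by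
  rw [isRSIntegral_iff_stieltjesSum]
  intro ε hε
  obtain ⟨δ, hδ, -, hδε⟩ :=
    exists_pos_le_one_mul_rpow_le (K * (b - a)) (sub_pos.2 hθ) (half_pos hε)
  refine ⟨min h δ, lt_min hh hδ, fun u n hu h0 hn hstep ↦ ?_⟩
  have hterm : ∀ k ∈ Finset.range n, |f (u k) * (g (u (k + 1)) - g (u k)) - (y (u (k + 1)) -
      y (u k))| ≤ K * δ ^ (θ - 1) * (u (k + 1) - u k) := by
    intro k hk
    have hkn := Finset.mem_range.1 hk
    have hmem : ∀ j ≤ n, u j ∈ Icc a b := fun j hj ↦ ⟨h0 ▸ hu j.zero_le, hn ▸ hu hj⟩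
    have hd : 0 ≤ u (k + 1) - u k := sub_nonneg.2 (hu k.le_succ)
    have hlt := hstep k hkn
    rw [abs_sub_comm]
    calc _ ≤ K * (u (k + 1) - u k) ^ (θ - 1 + 1) := by
          simpa using hy _ (hmem k hkn.le) _ (hmem (k + 1) hkn) (hu k.le_succ)
            (hlt.le.trans (min_le_left _ _))
      _ ≤ K * (δ ^ (θ - 1) * (u (k + 1) - u k) ^ (1 : ℝ)) := by
          gcongr
          exact rpow_add_le_mul_rpow hd (hlt.le.trans (min_le_right _ _)) (by linarith) zero_le_one
      _ = _ := by rw [Real.rpow_one, mul_assoc]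
  calc |stieltjesSum f g u n - (y b - y a)|
      = |∑ k ∈ Finset.range n, (f (u k) * (g (u (k + 1)) - g (u k)) -
          (y (u (k + 1)) - y (u k)))| := by
        rw [Finset.sum_sub_distrib, Finset.sum_range_sub fun k ↦ y (u k), h0, hn, stieltjesSum]
    _ ≤ ∑ k ∈ Finset.range n, K * δ ^ (θ - 1) * (u (k + 1) - u k) :=
        (Finset.abs_sum_le_sum_abs _ _).trans (Finset.sum_le_sum hterm)
    _ = K * (b - a) * δ ^ (θ - 1) := by
        rw [← Finset.mul_sum, Finset.sum_range_sub, h0, hn]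
        ring
    _ < ε := hδε.trans_lt (half_lt_self hε)

end RiemannStieltjes

section Young

/-- The constant in the Young–Loève estimate for integrals with total Hölder exponent `θ > 1`. -/
noncomputable def youngConst (θ : ℝ) : ℝ := 1 / (1 - 2 * (1 / 2) ^ θ)

lemma two_mul_half_rpow_lt_one {θ : ℝ} (hθ : 1 < θ) : 2 * (1 / 2 : ℝ) ^ θ < 1 := by
  have := Real.rpow_lt_rpow_of_exponent_gt (x := 1 / 2) (by norm_num) (by norm_num) hθ
  rw [Real.rpow_one] at this
  linarith

lemma youngConst_nonneg {θ : ℝ} (hθ : 1 < θ) : 0 ≤ youngConst θ :=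
  one_div_nonneg.2 (sub_nonneg.2 (two_mul_half_rpow_lt_one hθ).le)

variable {f g : ℝ → ℝ} {s t β γ Cf L : ℝ}

lemma abs_sub_mul_sub_le (hβ : 0 ≤ β) (hγ : 0 ≤ γ) (hCf : 0 ≤ Cf) (hL : 0 ≤ L)
    (hf : HolderBoundOn Cf β f (Icc s t)) (hg : HolderBoundOn L γ g (Icc s t)) {p q r r' d : ℝ}
    (hp : p ∈ Icc s t) (hq : q ∈ Icc s t) (hr : r ∈ Icc s t) (hr' : r' ∈ Icc s t) (hpq : p ≤ q)
    (hrr : r ≤ r') (hqd : q - p ≤ d) (hrd : r' - r ≤ d) :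
    |(f q - f p) * (g r' - g r)| ≤ Cf * L * d ^ (β + γ) := by
  have hqp : 0 ≤ q - p := sub_nonneg.2 hpq
  have hd : 0 ≤ d := hqp.trans hqd
  have := Real.rpow_nonneg hd β
  rw [abs_mul]
  calc |f q - f p| * |g r' - g r| ≤ (Cf * (q - p) ^ β) * (L * (r' - r) ^ γ) := by
        gcongr
        exacts [hf.le hp hq hpq, hg.le hr hr' hrr]
    _ ≤ (Cf * d ^ β) * (L * d ^ γ) := by gcongr
    _ = Cf * L * d ^ (β + γ) := by
        rw [Real.rpow_add_of_nonneg hd hβ hγ]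
        ring

lemma abs_stieltjesSum_sub_le (hβ : 0 ≤ β) (hγ : 0 ≤ γ) (hβγ : 1 < β + γ) (hCf : 0 ≤ Cf)
    (hL : 0 ≤ L) (hf : HolderBoundOn Cf β f (Icc s t)) (hg : HolderBoundOn L γ g (Icc s t))
    {u : ℕ → ℝ} {n : ℕ} (hu : Monotone u) (h0 : u 0 = s) (hn : u n = t)
    (hmem : ∀ k, u k ∈ Icc s t) :
    |stieltjesSum f g u n - f s * (g t - g s)| ≤
      youngConst (β + γ) * (2 * Cf * L) * (t - s) ^ (β + γ) := by
  set S := stieltjesSum f g u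
  set E : ℕ → ℕ → ℝ := fun i k ↦ S k - S i - f (u i) * (g (u k) - g (u i))
  have hdefect : ∀ i m k, i ≤ m → m < k →
      |E i k - E i m - E (m + 1) k| ≤ 2 * Cf * L * (u k - u i) ^ (β + γ) := by
    intro i m k him hmk
    have hS : S (m + 1) - S m = f (u m) * (g (u (m + 1)) - g (u m)) :=
      Finset.sum_range_succ_sub_sum _
    have hdecomp : E i k - E i m - E (m + 1) k = (f (u m) - f (u i)) * (g (u k) - g (u m)) +
        (f (u (m + 1)) - f (u m)) * (g (u k) - g (u (m + 1))) := by
      simp only [E]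
      linear_combination hS
    have h₁ := hu him
    have h₂ := hu m.le_succ
    have h₃ := hu (Nat.succ_le_iff.2 hmk)
    have hleft := abs_sub_mul_sub_le hβ hγ hCf hL hf hg (d := u k - u i) (hmem i) (hmem m)
      (hmem m) (hmem k) h₁ (h₂.trans h₃) (by linarith) (by linarith)
    have hright := abs_sub_mul_sub_le hβ hγ hCf hL hf hg (d := u k - u i) (hmem m) (hmem (m + 1))
      (hmem (m + 1)) (hmem k) h₂ h₃ (by linarith) (by linarith)
    rw [hdecomp]
    linarith [abs_add_le ((f (u m) - f (u i)) * (g (u k) - g (u m)))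
      ((f (u (m + 1)) - f (u m)) * (g (u k) - g (u (m + 1))))]
  have hconst : (1 + 1) * (1 / 2) ^ (β + γ) * (youngConst (β + γ) * (2 * Cf * L)) +
      2 * Cf * L = youngConst (β + γ) * (2 * Cf * L) := by
    have : 1 - 2 * (1 / 2 : ℝ) ^ (β + γ) ≠ 0 := (sub_pos.2 (two_mul_half_rpow_lt_one hβγ)).ne'
    rw [youngConst]
    field_simp
    ring
  have := discrete_sewing (w := fun _ ↦ 1) (E := E) (h := u n - u 0) hu (fun _ ↦ zero_le_one)
    (mul_nonneg (youngConst_nonneg hβγ) (by positivity)) (by linarith) hconst.le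
    (fun i ↦ by simp [E])
    (fun i m k him hmk _ _ ↦ ⟨by norm_num, by simpa using hdefect i m k him hmk⟩) n.zero_le le_rfl
  simpa [E, S, stieltjesSum, h0, hn] using this

/-- The Young–Loève estimate. -/
theorem IsRSIntegral.abs_sub_mul_le {I : ℝ} (hI : IsRSIntegral f g s t I) (hst : s ≤ t) (hβ : 0 ≤ β)
    (hγ : 0 ≤ γ) (hβγ : 1 < β + γ) (hCf : 0 ≤ Cf) (hL : 0 ≤ L)
    (hf : HolderBoundOn Cf β f (Icc s t)) (hg : HolderBoundOn L γ g (Icc s t)) :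
    |I - f s * (g t - g s)| ≤ youngConst (β + γ) * (2 * Cf * L) * (t - s) ^ (β + γ) := by
  refine le_of_forall_pos_le_add fun ε hε ↦ ?_
  obtain ⟨u, n, hu, h0, hn, hmem, -, hlt⟩ :=
    hI.exists_partition_abs_stieltjesSum_sub_lt hst hε one_pos
  have hsum := abs_stieltjesSum_sub_le hβ hγ hβγ hCf hL hf hg hu h0 hn hmem
  calc |I - f s * (g t - g s)|
      ≤ |I - stieltjesSum f g u n| + |stieltjesSum f g u n - f s * (g t - g s)| := abs_sub_le _ _ _
    _ ≤ _ := by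
        rw [abs_sub_comm I]
        linarith

end Young

section JointlyLipschitz

/-- `φ` is globally Lipschitz in both variables jointly, with constant `K` for the `ℓ¹` metric on
`ℝ × ℝ`. -/
def JointlyLipschitz (K : ℝ) (φ : ℝ → ℝ → ℝ) : Prop :=
  ∀ t₁ x₁ t₂ x₂ : ℝ, |φ t₂ x₂ - φ t₁ x₁| ≤ K * (|t₂ - t₁| + |x₂ - x₁|)

namespace JointlyLipschitz

variable {φ φx : ℝ → ℝ → ℝ} {K D γ a b : ℝ} {x : ℝ → ℝ}

lemma nonneg (hφ : JointlyLipschitz K φ) : 0 ≤ K := by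
  simpa using (abs_nonneg _).trans (hφ 0 0 1 0)

lemma abs_sub_le (hφ : JointlyLipschitz K φ) (t x y : ℝ) : |φ t x - φ t y| ≤ K * |x - y| := by
  simpa using hφ t y t x

lemma continuous (hφ : JointlyLipschitz K φ) : Continuous fun p : ℝ × ℝ ↦ φ p.1 p.2 := by
  refine continuous_iff_continuousAt.2 fun p ↦ tendsto_iff_dist_tendsto_zero.2 ?_
  have hmod : Continuous fun q : ℝ × ℝ ↦ K * (|q.1 - p.1| + |q.2 - p.2|) := by fun_prop
  exact squeeze_zero (fun _ ↦ dist_nonneg) (fun q ↦ hφ p.1 p.2 q.1 q.2)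
    (by simpa using hmod.tendsto p)

lemma continuousOn_comp (hφ : JointlyLipschitz K φ) {s : Set ℝ} (hx : ContinuousOn x s) :
    ContinuousOn (fun t ↦ φ t (x t)) s :=
  hφ.continuous.comp_continuousOn (continuousOn_id.prodMk hx)

lemma holderBoundOn_comp (hφ : JointlyLipschitz K φ) (hγ : 0 ≤ γ) (hγ1 : γ ≤ 1)
    (hx : HolderBoundOn D γ x (Icc a b)) :
    HolderBoundOn (K * ((b - a) ^ (1 - γ) + D)) γ (fun t ↦ φ t (x t)) (Icc a b) := by
  intro t₁ h₁ t₂ h₂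
  have := hφ.nonneg
  calc |φ t₂ (x t₂) - φ t₁ (x t₁)| ≤ K * (|t₂ - t₁| + |x t₂ - x t₁|) := hφ _ _ _ _
    _ ≤ K * ((b - a) ^ (1 - γ) * |t₂ - t₁| ^ γ + D * |t₂ - t₁| ^ γ) := by
        gcongr
        exacts [le_rpow_mul_rpow (abs_nonneg _) (Real.dist_le_of_mem_Icc h₂ h₁) hγ hγ1,
          hx t₁ h₁ t₂ h₂]
    _ = _ := by ring

lemma exists_abs_le_mul_one_add_abs (hφ : JointlyLipschitz K φ) (T : ℝ) :
    ∃ M, ∀ t ∈ Icc 0 T, ∀ x, |φ t x| ≤ M * (1 + |x|) := by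
  refine ⟨|φ 0 0| + K * (T + 1), fun t ht x ↦ ?_⟩
  have hK := hφ.nonneg
  have hT : 0 ≤ T := ht.1.trans ht.2
  have hlip := hφ 0 0 t x
  rw [sub_zero, sub_zero, abs_of_nonneg ht.1] at hlip
  have hlin : K * (t + |x|) ≤ K * ((T + 1) * (1 + |x|)) := by
    gcongr
    nlinarith [abs_nonneg x, ht.2]
  nlinarith [abs_sub_abs_le_abs_sub (φ t x) (φ 0 0), abs_nonneg x, abs_nonneg (φ 0 0)]

lemma abs_deriv_le (hφ : JointlyLipschitz K φ)
    (hφx : ∀ t x, HasDerivAt (fun y ↦ φ t y) (φx t x) x) (t x : ℝ) : |φx t x| ≤ K :=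
  (hφx t x).le_of_lip' hφ.nonneg (Eventually.of_forall fun y ↦ hφ.abs_sub_le t y x)

end JointlyLipschitz

lemma exists_sub_sub_sub_eq {F G F' G' : ℝ → ℝ} (hF : ∀ x, HasDerivAt F (F' x) x)
    (hG : ∀ x, HasDerivAt G (G' x) x) (x₁ y₁ x₂ y₂ : ℝ) :
    ∃ l ∈ Ioo (0 : ℝ) 1, (F x₂ - F y₂) - (G x₁ - G y₁) =
      F' (y₂ + l * (x₂ - y₂)) * (x₂ - y₂) - G' (y₁ + l * (x₁ - y₁)) * (x₁ - y₁) := by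
  have hline (p q l : ℝ) : HasDerivAt (fun l : ℝ ↦ p + l * q) q l := by
    simpa using ((hasDerivAt_id l).mul_const q).const_add p
  have hderiv (l : ℝ) := ((hF _).comp l (hline y₂ (x₂ - y₂) l)).sub
    ((hG _).comp l (hline y₁ (x₁ - y₁) l))
  obtain ⟨l, hl, hslope⟩ := exists_hasDerivAt_eq_slope _ _ zero_lt_one
    (fun l _ ↦ (hderiv l).continuousAt.continuousWithinAt) fun l _ ↦ hderiv l
  refine ⟨l, hl, hslope.symm ▸ ?_⟩
  simp only [Pi.sub_apply, Function.comp_apply, one_mul, add_sub_cancel, zero_mul, add_zero,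
    sub_zero, div_one]
  ring

lemma abs_sub_sub_sub_le {σ σx : ℝ → ℝ → ℝ} {S S' : ℝ}
    (hσx : ∀ t x, HasDerivAt (fun y ↦ σ t y) (σx t x) x) (hσ : JointlyLipschitz S σ)
    (hσxL : JointlyLipschitz S' σx) (s t x₁ y₁ x₂ y₂ : ℝ) :
    |(σ t x₂ - σ t y₂) - (σ s x₁ - σ s y₁)| ≤ S * |(x₂ - y₂) - (x₁ - y₁)| +
      S' * (|t - s| + |x₂ - x₁| + |y₂ - y₁|) * |x₁ - y₁| := by
  obtain ⟨l, ⟨hl0, hl1⟩, hl⟩ := exists_sub_sub_sub_eq (hσx t) (hσx s) x₁ y₁ x₂ y₂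
  set p := y₂ + l * (x₂ - y₂)
  set q := y₁ + l * (x₁ - y₁)
  have hpq : |p - q| ≤ |x₂ - x₁| + |y₂ - y₁| :=
    calc |p - q|
      _ = |l * (x₂ - x₁) + (1 - l) * (y₂ - y₁)| := by
        congr 1
        simp only [p, q]
        ring
      _ ≤ l * |x₂ - x₁| + (1 - l) * |y₂ - y₁| := by
        simpa only [abs_mul, abs_of_pos hl0, abs_of_pos (sub_pos.2 hl1)]
          using abs_add_le (l * (x₂ - x₁)) ((1 - l) * (y₂ - y₁))
      _ ≤ |x₂ - x₁| + |y₂ - y₁| := by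
        nlinarith [abs_nonneg (x₂ - x₁), abs_nonneg (y₂ - y₁)]
  have hS' := hσxL.nonneg
  calc _ = |σx t p * ((x₂ - y₂) - (x₁ - y₁)) + (σx t p - σx s q) * (x₁ - y₁)| := by
        rw [hl]
        ring_nf
    _ ≤ |σx t p| * |(x₂ - y₂) - (x₁ - y₁)| + |σx t p - σx s q| * |x₁ - y₁| := by
        simpa only [abs_mul]
          using abs_add_le (σx t p * ((x₂ - y₂) - (x₁ - y₁))) ((σx t p - σx s q) * (x₁ - y₁))
    _ ≤ _ := by
        gcongr
        · exact hσ.abs_deriv_le hσx t p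
        · refine (hσxL s q t p).trans ?_
          rw [add_assoc]
          gcongr

end JointlyLipschitz

section YoungEquation

/-- `x` satisfies the Young integral equation
`x t = z + ∫₀ᵗ b(τ, x τ) dτ + ∫₀ᵗ σ(τ, x τ) dg(τ)` on `[0, T]`. -/
def IsYoungSolution (b σ : ℝ → ℝ → ℝ) (g : ℝ → ℝ) (z T : ℝ) (x : ℝ → ℝ) : Prop :=
  ∀ t ∈ Icc (0 : ℝ) T, ∃ I : ℝ, IsRSIntegral (fun τ ↦ σ τ (x τ)) g 0 t I ∧
    x t = z + (∫ τ in (0 : ℝ)..t, b τ (x τ)) + I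

variable {b σ σx : ℝ → ℝ → ℝ} {g x y : ℝ → ℝ} {z T β γ B S S' L D : ℝ}

lemma IsYoungSolution.apply_zero (hx : IsYoungSolution b σ g z T x) (hT : 0 ≤ T) : x 0 = z := by
  obtain ⟨I, hI, heq⟩ := hx 0 (left_mem_Icc.2 hT)
  simpa [hI.eq_zero] using heq

lemma IsYoungSolution.exists_sub_eq (hx : IsYoungSolution b σ g z T x)
    (hb : ContinuousOn (fun τ ↦ b τ (x τ)) (Icc 0 T)) {s t : ℝ} (hs : s ∈ Icc 0 T)
    (ht : t ∈ Icc 0 T) : ∃ J, IsRSIntegral (fun τ ↦ σ τ (x τ)) g s t J ∧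
      x t - x s = (∫ τ in s..t, b τ (x τ)) + J := by
  obtain ⟨I₁, hI₁, h₁⟩ := hx s hs
  obtain ⟨I₂, hI₂, h₂⟩ := hx t ht
  have hint {r : ℝ} (hr : r ∈ Icc 0 T) : IntervalIntegrable (fun τ ↦ b τ (x τ)) volume 0 r :=
    (hb.mono (uIcc_subset_Icc ⟨le_rfl, hr.1.trans hr.2⟩ hr)).intervalIntegrable
  refine ⟨I₂ - I₁, hI₁.sub_left hI₂ hs.1, ?_⟩
  rw [h₁, h₂, ← integral_interval_sub_left (hint ht) (hint hs)]
  ring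

lemma abs_integral_add_le {p f : ℝ → ℝ} {s t H J Mp Mf Cf : ℝ}
    (hJ : IsRSIntegral f g s t J) (hst : s ≤ t) (htH : t - s ≤ H) (hβ : 0 ≤ β) (hγ : 0 ≤ γ)
    (hγ1 : γ ≤ 1) (hβγ : 1 < β + γ) (hCf : 0 ≤ Cf) (hL : 0 ≤ L)
    (hp : ∀ r ∈ Icc s t, |p r| ≤ Mp) (hfs : |f s| ≤ Mf) (hf : HolderBoundOn Cf β f (Icc s t))
    (hg : HolderBoundOn L γ g (Icc s t)) :
    |(∫ r in s..t, p r) + J| ≤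
      (Mp * H ^ (1 - γ) + Mf * L + youngConst (β + γ) * (2 * Cf * L) * H ^ β) * (t - s) ^ γ := by
  have hd : 0 ≤ t - s := sub_nonneg.2 hst
  have hMp : 0 ≤ Mp := (abs_nonneg _).trans (hp s (left_mem_Icc.2 hst))
  have hMf : 0 ≤ Mf := (abs_nonneg _).trans hfs
  have hY := youngConst_nonneg hβγ
  have hdrift : |∫ r in s..t, p r| ≤ Mp * (t - s) := by
    have := norm_integral_le_of_norm_le_const (a := s) (b := t) (f := p) (C := Mp) fun r hr ↦
      hp r (Set.Ioc_subset_Icc_self (uIoc_of_le hst ▸ hr))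
    rwa [abs_of_nonneg hd] at this
  have hlead : |f s * (g t - g s)| ≤ Mf * (L * (t - s) ^ γ) := by
    rw [abs_mul]
    gcongr
    exact hg.le (left_mem_Icc.2 hst) (right_mem_Icc.2 hst) hst
  calc |(∫ r in s..t, p r) + J|
      = |(∫ r in s..t, p r) + f s * (g t - g s) + (J - f s * (g t - g s))| := by ring_nf
    _ ≤ |∫ r in s..t, p r| + |f s * (g t - g s)| + |J - f s * (g t - g s)| := abs_add_three _ _ _
    _ ≤ Mp * (t - s) + Mf * (L * (t - s) ^ γ) +
          youngConst (β + γ) * (2 * Cf * L) * (t - s) ^ (β + γ) := by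
        gcongr
        exact hJ.abs_sub_mul_le hst hβ hγ hβγ hCf hL hf hg
    _ ≤ Mp * (H ^ (1 - γ) * (t - s) ^ γ) + Mf * (L * (t - s) ^ γ) +
          youngConst (β + γ) * (2 * Cf * L) * (H ^ β * (t - s) ^ γ) := by
        gcongr
        exacts [le_rpow_mul_rpow hd htH hγ hγ1, rpow_add_le_mul_rpow hd htH hβ hγ]
    _ = _ := by ring

theorem IsYoungSolution.exists_holderBoundOn (hsol : IsYoungSolution b σ g z T x) {Cx : ℝ}
    (hβ : 0 < β) (hβ1 : β ≤ 1) (hγ : 0 < γ) (hγ1 : γ ≤ 1) (hβγ : 1 < β + γ) (hCx : 0 ≤ Cx)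
    (hL : 0 ≤ L) (hb : JointlyLipschitz B b) (hσ : JointlyLipschitz S σ)
    (hg : HolderBoundOn L γ g (Icc 0 T)) (hx : HolderBoundOn Cx β x (Icc 0 T)) :
    ∃ D, HolderBoundOn D γ x (Icc 0 T) := by
  have hxc := hx.continuousOn hβ
  have hbc := hb.continuousOn_comp hxc
  obtain ⟨Mb, hMb⟩ := isCompact_Icc.exists_bound_of_continuousOn hbc
  obtain ⟨Mσ, hMσ⟩ := isCompact_Icc.exists_bound_of_continuousOn (hσ.continuousOn_comp hxc)
  have hσx := hσ.holderBoundOn_comp hβ.le hβ1 hx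
  set Cf := S * ((T - 0) ^ (1 - β) + Cx)
  refine ⟨Mb * T ^ (1 - γ) + Mσ * L + youngConst (β + γ) * (2 * Cf * L) * T ^ β,
    .of_lt hγ.ne' fun s hs t ht hst ↦ ?_⟩
  obtain ⟨J, hJ, hxJ⟩ := hsol.exists_sub_eq hbc hs ht
  have hsub : Icc s t ⊆ Icc 0 T := Set.Icc_subset_Icc hs.1 ht.2
  have hT : 0 ≤ T - 0 := sub_nonneg.2 (hs.1.trans hs.2)
  have hCf : 0 ≤ Cf := mul_nonneg hσ.nonneg (by positivity)
  rw [hxJ]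
  exact abs_integral_add_le hJ hst.le (by linarith [hs.1, ht.2]) hβ.le hγ.le hγ1 hβγ hCf hL
    (fun r hr ↦ hMb r (hsub hr)) (hMσ s hs) (hσx.mono hsub) (hg.mono hsub)

lemma holderBoundOn_comp_sub_comp {a c m : ℝ} (hγ1 : γ ≤ 1) (hca : c - a ≤ 1)
    (hσ : JointlyLipschitz S σ)
    (hσx : ∀ t x, HasDerivAt (fun y ↦ σ t y) (σx t x) x) (hσxL : JointlyLipschitz S' σx)
    (hx : HolderBoundOn D γ x (Icc a c)) (hy : HolderBoundOn D γ y (Icc a c))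
    (hxy : HolderBoundOn m γ (fun t ↦ x t - y t) (Icc a c))
    (hle : ∀ t ∈ Icc a c, |x t - y t| ≤ m) :
    HolderBoundOn ((S + S' * (1 + 2 * D)) * m) γ (fun t ↦ σ t (x t) - σ t (y t)) (Icc a c) := by
  intro s hs t ht
  have hS := hσ.nonneg
  have hS' := hσxL.nonneg
  have hd : |t - s| ≤ |t - s| ^ γ :=
    Real.self_le_rpow_of_le_one (abs_nonneg _) ((Real.dist_le_of_mem_Icc ht hs).trans hca) hγ1
  have hincr : |t - s| + |x t - x s| + |y t - y s| ≤ (1 + 2 * D) * |t - s| ^ γ := by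
    linarith [hx s hs t ht, hy s hs t ht]
  calc |σ t (x t) - σ t (y t) - (σ s (x s) - σ s (y s))|
      ≤ S * |(x t - y t) - (x s - y s)| +
          S' * (|t - s| + |x t - x s| + |y t - y s|) * |x s - y s| :=
        abs_sub_sub_sub_le hσx hσ hσxL _ _ _ _ _ _
    _ ≤ S * (m * |t - s| ^ γ) + S' * ((1 + 2 * D) * |t - s| ^ γ) * m := by
        have := (by positivity : 0 ≤ |t - s| + |x t - x s| + |y t - y s|).trans hincr
        gcongr
        exacts [hxy s hs t ht, hle s hs]
    _ = _ := by ring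

lemma IsYoungSolution.holderBoundOn_sub (hx : IsYoungSolution b σ g z T x)
    (hy : IsYoungSolution b σ g z T y) (hγ : 1 / 2 < γ) (hγ1 : γ ≤ 1) (hD : 0 ≤ D) (hL : 0 ≤ L)
    (hb : JointlyLipschitz B b) (hσ : JointlyLipschitz S σ)
    (hσx : ∀ t x, HasDerivAt (fun y ↦ σ t y) (σx t x) x) (hσxL : JointlyLipschitz S' σx)
    (hg : HolderBoundOn L γ g (Icc 0 T)) (hxD : HolderBoundOn D γ x (Icc 0 T))
    (hyD : HolderBoundOn D γ y (Icc 0 T)) {a c h m : ℝ} (hac : Icc a c ⊆ Icc 0 T)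
    (hca : c - a ≤ h) (hh : 0 ≤ h) (hh1 : h ≤ 1) (heq : x a = y a) (hm : 0 ≤ m)
    (hxy : HolderBoundOn m γ (fun t ↦ x t - y t) (Icc a c)) :
    HolderBoundOn
      ((B + S * L + youngConst (γ + γ) * (2 * (S + S' * (1 + 2 * D)) * L)) * h ^ γ * m) γ
      (fun t ↦ x t - y t) (Icc a c) := by
  have hγ0 : 0 < γ := by linarith
  have hB := hb.nonneg
  have hS := hσ.nonneg
  have hS' := hσxL.nonneg
  have hbx := hb.continuousOn_comp (hxD.continuousOn hγ0)
  have hby := hb.continuousOn_comp (hyD.continuousOn hγ0)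
  have hle : ∀ r ∈ Icc a c, |x r - y r| ≤ m * h ^ γ := by
    intro r hr
    have hbound := hxy.le (left_mem_Icc.2 (hr.1.trans hr.2)) hr hr.1
    rw [heq, sub_self, sub_zero] at hbound
    have := sub_nonneg.2 hr.1
    exact hbound.trans (by gcongr; linarith [hr.2])
  have hφ := holderBoundOn_comp_sub_comp hγ1 (hca.trans hh1) hσ hσx hσxL
    (hxD.mono hac) (hyD.mono hac) hxy fun r hr ↦
      (hle r hr).trans (mul_le_of_le_one_right hm (Real.rpow_le_one hh hh1 hγ0.le))
  refine .of_lt hγ0.ne' fun r hr s hs hrs ↦ ?_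
  have hsub : Icc r s ⊆ Icc a c := Set.Icc_subset_Icc hr.1 hs.2
  obtain ⟨I, hI, hxI⟩ := hx.exists_sub_eq hbx (hac hr) (hac hs)
  obtain ⟨J, hJ, hyJ⟩ := hy.exists_sub_eq hby (hac hr) (hac hs)
  have hdiff : x s - y s - (x r - y r) =
      (∫ τ in r..s, (b τ (x τ) - b τ (y τ))) + (I - J) := by
    have hsub0 := uIcc_of_le hrs.le ▸ hsub.trans hac
    rw [integral_sub (hbx.mono hsub0).intervalIntegrable (hby.mono hsub0).intervalIntegrable]
    linarith
  rw [hdiff]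
  refine (abs_integral_add_le (H := h) (hI.sub hJ) hrs.le (by linarith [hr.1, hs.2]) hγ0.le hγ0.le
    hγ1 (by linarith) (by positivity) hL
    (fun τ hτ ↦ (hb.abs_sub_le _ _ _).trans (mul_le_mul_of_nonneg_left (hle τ (hsub hτ)) hB))
    ((hσ.abs_sub_le _ _ _).trans (mul_le_mul_of_nonneg_left (hle r hr) hS)) (hφ.mono hsub)
    (hg.mono (hsub.trans hac))).trans ?_
  have hh' : h ^ (1 - γ) ≤ 1 := Real.rpow_le_one hh hh1 (by linarith)
  have := sub_nonneg.2 hrs.le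
  gcongr
  calc _ ≤ B * (m * h ^ γ) * 1 + S * (m * h ^ γ) * L +
        youngConst (γ + γ) * (2 * ((S + S' * (1 + 2 * D)) * m) * L) * h ^ γ := by gcongr
    _ = _ := by ring

/-- On windows of length `h` so short that the integral equation halves the Hölder constant of
`x - y`, the solutions agree as soon as they agree at the left endpoint. -/
theorem IsYoungSolution.eqOn (hx : IsYoungSolution b σ g z T x)
    (hy : IsYoungSolution b σ g z T y) (hγ : 1 / 2 < γ) (hγ1 : γ ≤ 1) (hD : 0 ≤ D) (hL : 0 ≤ L)
    (hb : JointlyLipschitz B b) (hσ : JointlyLipschitz S σ)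
    (hσx : ∀ t x, HasDerivAt (fun y ↦ σ t y) (σx t x) x) (hσxL : JointlyLipschitz S' σx)
    (hg : HolderBoundOn L γ g (Icc 0 T)) (hxD : HolderBoundOn D γ x (Icc 0 T))
    (hyD : HolderBoundOn D γ y (Icc 0 T)) : EqOn x y (Icc 0 T) := by
  intro t ht
  have hT : 0 ≤ T := ht.1.trans ht.2
  have heq0 : x 0 = y 0 := (hx.apply_zero hT).trans (hy.apply_zero hT).symm
  obtain ⟨h, hh, hh1, hsmall⟩ := exists_pos_le_one_mul_rpow_le
    (B + S * L + youngConst (γ + γ) * (2 * (S + S' * (1 + 2 * D)) * L))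
    (by linarith : 0 < γ) one_half_pos
  obtain ⟨u, N, hu, hu0, huN, hmem, hstep⟩ := exists_partition hT hh
  have hwindow (n : ℕ) (heq : x (u n) = y (u n)) : EqOn x y (Icc (u n) (u (n + 1))) := by
    intro r hr
    have hsub := Set.Icc_subset_Icc (hmem n).1 (hmem (n + 1)).2
    have hconst := HolderBoundOn.eq_const_of_halving (add_nonneg hD hD)
      ((hxD.mono hsub).sub (hyD.mono hsub)) (fun m hm hxy ↦
        (hx.holderBoundOn_sub hy hγ hγ1 hD hL hb hσ hσx hσxL hg hxD hyD hsub (hstep n) hh.le hh1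
          heq hm hxy).mono_const (by linarith [mul_le_mul_of_nonneg_right hsmall hm]))
      (left_mem_Icc.2 (hu n.le_succ)) hr
    exact sub_eq_zero.1 (hconst.trans (sub_eq_zero.2 heq))
  have hnode (n : ℕ) : x (u n) = y (u n) := by
    induction n with
    | zero => rwa [hu0]
    | succ n ih => exact hwindow n ih (right_mem_Icc.2 (hu n.le_succ))
  rcases N.eq_zero_or_pos with rfl | hN
  · rwa [le_antisymm (ht.2.trans_eq (huN.symm.trans hu0)) ht.1]
  · obtain ⟨m, -, -, hm⟩ := exists_le_le_succ_of_mem_Icc hu hN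
      (t := t) ⟨hu0.trans_le ht.1, ht.2.trans_eq huN.symm⟩
    exact hwindow m (hnode m) hm

end YoungEquation

section EulerScheme

/-- `F s x t t'` behaves like the increment over `[t, t']` of an equation whose coefficients are
frozen at the state `(s, x)`: it has linear growth in `x` and is Lipschitz in the state, both of
order `γ` in time, and it is additive over adjacent time intervals. -/
structure IsFrozenIncrement (P γ T : ℝ) (F : ℝ → ℝ → ℝ → ℝ → ℝ) : Prop where
  growth : ∀ s ∈ Icc 0 T, ∀ t ∈ Icc 0 T, ∀ t' ∈ Icc 0 T, t ≤ t' → ∀ x,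
    |F s x t t'| ≤ P * (1 + |x|) * (t' - t) ^ γ
  lipschitz : ∀ s ∈ Icc 0 T, ∀ s' ∈ Icc 0 T, ∀ t ∈ Icc 0 T, ∀ t' ∈ Icc 0 T, t ≤ t' → ∀ x x',
    |F s' x' t t' - F s x t t'| ≤ P * (|s' - s| + |x' - x|) * (t' - t) ^ γ
  add : ∀ s x t t' t'', F s x t t' + F s x t' t'' = F s x t t''

/-- The Euler polygon started at `z` along the partition `u`. -/
def eulerScheme (F : ℝ → ℝ → ℝ → ℝ → ℝ) (z : ℝ) (u : ℕ → ℝ) : ℕ → ℝ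
  | 0 => z
  | k + 1 => eulerScheme F z u k + F (u k) (eulerScheme F z u k) (u k) (u (k + 1))

/-- The error made between the nodes `i` and `k` when a single frozen increment replaces the Euler
polygon. -/
def eulerDefect (F : ℝ → ℝ → ℝ → ℝ → ℝ) (z : ℝ) (u : ℕ → ℝ) (i k : ℕ) : ℝ :=
  eulerScheme F z u k - eulerScheme F z u i - F (u i) (eulerScheme F z u i) (u i) (u k)

lemma eulerDefect_succ (F : ℝ → ℝ → ℝ → ℝ → ℝ) (z : ℝ) (u : ℕ → ℝ) (i : ℕ) :
    eulerDefect F z u i (i + 1) = 0 := by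
  simp [eulerDefect, eulerScheme]

lemma exists_sewing_constants {q Q : ℝ} (hq0 : 0 ≤ q) (hq : 2 * q < 1) (hQ : 0 ≤ Q) :
    ∃ K ε : ℝ, 0 ≤ K ∧ 0 < ε ∧ ε ≤ 1 ∧ (1 + (1 + ε) ^ 2) * q * K + Q ≤ K := by
  have hgap : 0 < 1 - 2 * q := by linarith
  refine ⟨2 * Q / (1 - 2 * q), (1 - 2 * q) / 3, by positivity, by positivity, by linarith, ?_⟩
  set K := 2 * Q / (1 - 2 * q)
  have hKQ : K * (1 - 2 * q) = 2 * Q := div_mul_cancel₀ _ hgap.ne'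
  have hsq : 1 + (1 + (1 - 2 * q) / 3) ^ 2 ≤ 3 - 2 * q := by nlinarith
  have hK : 0 ≤ K := by positivity
  calc _ ≤ (3 - 2 * q) * q * K + Q := by gcongr
    _ = K - (1 - 2 * q) * K * (1 / 2 - q) := by linear_combination -(1 / 2) * hKQ
    _ ≤ K := sub_le_self _ (mul_nonneg (mul_nonneg hgap.le hK) (by linarith))

namespace IsFrozenIncrement

variable {F : ℝ → ℝ → ℝ → ℝ → ℝ} {P γ T K h ε z : ℝ} {u : ℕ → ℝ}

lemma eulerDefect_self (hF : IsFrozenIncrement P γ T F) (z : ℝ) (u : ℕ → ℝ) (i : ℕ) :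
    eulerDefect F z u i i = 0 := by
  have : F (u i) (eulerScheme F z u i) (u i) (u i) = 0 := by
    simpa using hF.add (u i) (eulerScheme F z u i) (u i) (u i) (u i)
  simp [eulerDefect, this]

lemma eulerDefect_sub_sub (hF : IsFrozenIncrement P γ T F) (z : ℝ) (u : ℕ → ℝ) (i m k : ℕ) :
    eulerDefect F z u i k - eulerDefect F z u i m - eulerDefect F z u (m + 1) k =
      (F (u m) (eulerScheme F z u m) (u m) (u k) - F (u i) (eulerScheme F z u i) (u m) (u k)) +
      (F (u (m + 1)) (eulerScheme F z u (m + 1)) (u (m + 1)) (u k) -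
        F (u m) (eulerScheme F z u m) (u (m + 1)) (u k)) := by
  have hi := hF.add (u i) (eulerScheme F z u i) (u i) (u m) (u k)
  have hm := hF.add (u m) (eulerScheme F z u m) (u m) (u (m + 1)) (u k)
  simp only [eulerDefect, eulerScheme]
  linarith

lemma abs_eulerScheme_sub_le (hF : IsFrozenIncrement P γ T F) (hγ : 0 ≤ γ) (hK : 0 ≤ K)
    (hKh : K * h ^ γ ≤ P) (hu : Monotone u) (huT : ∀ k, u k ∈ Icc 0 T) {i k : ℕ} (hik : i ≤ k)
    (hd : u k - u i ≤ h)
    (hdef : |eulerDefect F z u i k| ≤ K * (1 + |eulerScheme F z u i|) * (u k - u i) ^ (γ + γ)) :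
    |eulerScheme F z u k - eulerScheme F z u i| ≤
      2 * P * (1 + |eulerScheme F z u i|) * (u k - u i) ^ γ := by
  have hd0 : 0 ≤ u k - u i := sub_nonneg.2 (hu hik)
  set x := eulerScheme F z u
  calc |x k - x i| = |eulerDefect F z u i k + F (u i) (x i) (u i) (u k)| := by
        rw [eulerDefect, sub_add_cancel]
    _ ≤ K * (1 + |x i|) * (u k - u i) ^ (γ + γ) + P * (1 + |x i|) * (u k - u i) ^ γ :=
        (abs_add_le _ _).trans
          (add_le_add hdef (hF.growth _ (huT i) _ (huT i) _ (huT k) (hu hik) _))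
    _ ≤ K * (1 + |x i|) * (h ^ γ * (u k - u i) ^ γ) + P * (1 + |x i|) * (u k - u i) ^ γ := by
        gcongr
        exact rpow_add_le_mul_rpow hd0 hd hγ hγ
    _ = (K * h ^ γ + P) * ((1 + |x i|) * (u k - u i) ^ γ) := by ring
    _ ≤ (P + P) * ((1 + |x i|) * (u k - u i) ^ γ) := by gcongr
    _ = _ := by ring

lemma one_add_abs_eulerScheme_le (hF : IsFrozenIncrement P γ T F) (hγ : 0 ≤ γ) (hP : 0 ≤ P)
    (hK : 0 ≤ K) (hKh : K * h ^ γ ≤ P) (hPh : 2 * P * h ^ γ ≤ ε) (hu : Monotone u)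
    (huT : ∀ k, u k ∈ Icc 0 T) {i k : ℕ} (hik : i ≤ k) (hd : u k - u i ≤ h)
    (hdef : |eulerDefect F z u i k| ≤ K * (1 + |eulerScheme F z u i|) * (u k - u i) ^ (γ + γ)) :
    1 + |eulerScheme F z u k| ≤ (1 + ε) * (1 + |eulerScheme F z u i|) := by
  have hincr := hF.abs_eulerScheme_sub_le hγ hK hKh hu huT hik hd hdef
  have hd0 : 0 ≤ u k - u i := sub_nonneg.2 (hu hik)
  set x := eulerScheme F z u
  have hsmall : 2 * P * (1 + |x i|) * (u k - u i) ^ γ ≤ ε * (1 + |x i|) :=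
    calc _ ≤ 2 * P * (1 + |x i|) * h ^ γ := by gcongr
      _ = 2 * P * h ^ γ * (1 + |x i|) := by ring
      _ ≤ _ := by gcongr
  linarith [abs_sub_abs_le_abs_sub (x k) (x i)]

lemma abs_sub_le_of_near (hF : IsFrozenIncrement P γ T F) (hγ : 0 ≤ γ) (hγ1 : γ ≤ 1) (hP : 0 ≤ P)
    {s s' t t' x x' d : ℝ} (hs : s ∈ Icc 0 T) (hs' : s' ∈ Icc 0 T) (ht : t ∈ Icc 0 T)
    (ht' : t' ∈ Icc 0 T) (htt' : t ≤ t') (htd : t' - t ≤ d) (hd1 : d ≤ 1) (hsd : |s' - s| ≤ d)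
    (hx : |x' - x| ≤ 2 * P * (1 + |x|) * d ^ γ) :
    |F s' x' t t' - F s x t t'| ≤ P * (1 + 2 * P) * (1 + |x|) * d ^ (γ + γ) := by
  have htt0 : 0 ≤ t' - t := sub_nonneg.2 htt'
  have hd0 : 0 ≤ d := htt0.trans htd
  have hdγ : d ≤ (1 + |x|) * d ^ γ :=
    (Real.self_le_rpow_of_le_one hd0 hd1 hγ1).trans
      (le_mul_of_one_le_left (by positivity) (by linarith [abs_nonneg x]))
  calc |F s' x' t t' - F s x t t'| ≤ P * (|s' - s| + |x' - x|) * (t' - t) ^ γ :=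
        hF.lipschitz _ hs _ hs' _ ht _ ht' htt' _ _
    _ ≤ P * ((1 + |x|) * d ^ γ + 2 * P * (1 + |x|) * d ^ γ) * d ^ γ := by
        gcongr
        exact hsd.trans hdγ
    _ = _ := by
        rw [Real.rpow_add_of_nonneg hd0 hγ hγ]
        ring

lemma abs_eulerDefect_sub_sub_le (hF : IsFrozenIncrement P γ T F) (hγ : 0 ≤ γ) (hγ1 : γ ≤ 1)
    (hP : 0 ≤ P) (hu : Monotone u) (huT : ∀ k, u k ∈ Icc 0 T) {i m k : ℕ} (him : i ≤ m)
    (hmk : m < k) (hd : u k - u i ≤ 1)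
    (hw : 1 + |eulerScheme F z u m| ≤ 2 * (1 + |eulerScheme F z u i|))
    (him_incr : |eulerScheme F z u m - eulerScheme F z u i| ≤
      2 * P * (1 + |eulerScheme F z u i|) * (u m - u i) ^ γ)
    (hm_incr : |eulerScheme F z u (m + 1) - eulerScheme F z u m| ≤
      2 * P * (1 + |eulerScheme F z u m|) * (u (m + 1) - u m) ^ γ) :
    |eulerDefect F z u i k - eulerDefect F z u i m - eulerDefect F z u (m + 1) k| ≤
      3 * (P * (1 + 2 * P)) * (1 + |eulerScheme F z u i|) * (u k - u i) ^ (γ + γ) := by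
  have him_le : u i ≤ u m := hu him
  have hm_le : u m ≤ u (m + 1) := hu m.le_succ
  have hmk_le : u (m + 1) ≤ u k := hu hmk
  have him_nonneg := sub_nonneg.2 him_le
  have hm_nonneg := sub_nonneg.2 hm_le
  set x := eulerScheme F z u
  set d := u k - u i
  have hd0 : 0 ≤ d := by linarith
  have hchange_i := hF.abs_sub_le_of_near (x := x i) (x' := x m) hγ hγ1 hP (huT i) (huT m)
    (huT m) (huT k) (hu hmk.le) (by linarith) hd (by rw [abs_of_nonneg him_nonneg]; linarith)
    (him_incr.trans (by gcongr; linarith))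
  have hchange_m := hF.abs_sub_le_of_near (x := x m) (x' := x (m + 1)) hγ hγ1 hP (huT m)
    (huT (m + 1)) (huT (m + 1)) (huT k) hmk_le (by linarith) hd
    (by rw [abs_of_nonneg hm_nonneg]; linarith) (hm_incr.trans (by gcongr; linarith))
  rw [hF.eulerDefect_sub_sub]
  calc _ ≤ P * (1 + 2 * P) * (1 + |x i|) * d ^ (γ + γ) +
        P * (1 + 2 * P) * (1 + |x m|) * d ^ (γ + γ) :=
        (abs_add_le _ _).trans (add_le_add hchange_i hchange_m)
    _ ≤ P * (1 + 2 * P) * (1 + |x i|) * d ^ (γ + γ) +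
        P * (1 + 2 * P) * (2 * (1 + |x i|)) * d ^ (γ + γ) := by gcongr
    _ = _ := by ring

lemma abs_eulerDefect_le (hF : IsFrozenIncrement P γ T F) (hγ : 0 ≤ γ) (hγ1 : γ ≤ 1) (hP : 0 ≤ P)
    (hK : 0 ≤ K) (hh : h ≤ 1) (hε : 0 ≤ ε) (hε1 : ε ≤ 1) (hKh : K * h ^ γ ≤ P)
    (hPh : 2 * P * h ^ γ ≤ ε)
    (hKP : (1 + (1 + ε) ^ 2) * (1 / 2) ^ (γ + γ) * K + 3 * (P * (1 + 2 * P)) ≤ K)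
    (hu : Monotone u) (huT : ∀ k, u k ∈ Icc 0 T) {i k : ℕ} (hik : i ≤ k) (hd : u k - u i ≤ h) :
    |eulerDefect F z u i k| ≤ K * (1 + |eulerScheme F z u i|) * (u k - u i) ^ (γ + γ) := by
  refine discrete_sewing (w := fun i ↦ 1 + |eulerScheme F z u i|) hu (fun i ↦ by positivity) hK
    (by positivity) hKP (hF.eulerDefect_self z u) (fun i m k him hmk hd hdef ↦ ?_) hik hd
  have him_le : u i ≤ u m := hu him
  have hm_le : u m ≤ u (m + 1) := hu m.le_succ
  have hmk_le : u (m + 1) ≤ u k := hu hmk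
  have hdef_succ : |eulerDefect F z u m (m + 1)| ≤
      K * (1 + |eulerScheme F z u m|) * (u (m + 1) - u m) ^ (γ + γ) := by
    have := sub_nonneg.2 hm_le
    rw [eulerDefect_succ, abs_zero]
    positivity
  have hw := hF.one_add_abs_eulerScheme_le hγ hP hK hKh hPh hu huT him (by linarith) hdef
  have hw_succ :=
    hF.one_add_abs_eulerScheme_le hγ hP hK hKh hPh hu huT m.le_succ (by linarith) hdef_succ
  constructor
  · calc 1 + |eulerScheme F z u (m + 1)| ≤ (1 + ε) * (1 + |eulerScheme F z u m|) := hw_succ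
      _ ≤ (1 + ε) * ((1 + ε) * (1 + |eulerScheme F z u i|)) := by gcongr
      _ = (1 + ε) ^ 2 * (1 + |eulerScheme F z u i|) := by ring
  · exact hF.abs_eulerDefect_sub_sub_le hγ hγ1 hP hu huT him hmk (hd.trans hh)
      (hw.trans (by gcongr; linarith))
      (hF.abs_eulerScheme_sub_le hγ hK hKh hu huT him (by linarith) hdef)
      (hF.abs_eulerScheme_sub_le hγ hK hKh hu huT m.le_succ (by linarith) hdef_succ)

theorem exists_abs_eulerDefect_le (hF : IsFrozenIncrement P γ T F) (hγ : 1 / 2 < γ) (hγ1 : γ ≤ 1)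
    (hP : 0 < P) :
    ∃ K h : ℝ, 0 ≤ K ∧ 0 < h ∧ h ≤ 1 ∧ ∀ (z : ℝ) (u : ℕ → ℝ), Monotone u →
      (∀ k, u k ∈ Icc 0 T) → ∀ i k, i ≤ k → u k - u i ≤ h →
        |eulerDefect F z u i k| ≤ K * (1 + |eulerScheme F z u i|) * (u k - u i) ^ (γ + γ) ∧
        1 + |eulerScheme F z u k| ≤ 2 * (1 + |eulerScheme F z u i|) := by
  have hγ0 : 0 < γ := by linarith
  obtain ⟨K, ε, hK, hε0, hε1, hρ⟩ := exists_sewing_constants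
    (by positivity : (0 : ℝ) ≤ (1 / 2) ^ (γ + γ)) (two_mul_half_rpow_lt_one (by linarith))
    (by positivity : 0 ≤ 3 * (P * (1 + 2 * P)))
  obtain ⟨h, hh, hh1, hsmall⟩ :=
    exists_pos_le_one_mul_rpow_le (K + 2 * P) hγ0 (lt_min hP hε0)
  have hhγ : 0 ≤ h ^ γ := by positivity
  obtain ⟨hsmallP, hsmallε⟩ := le_min_iff.1 hsmall
  have hKh : K * h ^ γ ≤ P := by nlinarith
  have hPh : 2 * P * h ^ γ ≤ ε := by nlinarith
  refine ⟨K, h, hK, hh, hh1, fun z u hu huT i k hik hd ↦ ?_⟩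
  have hdef := hF.abs_eulerDefect_le (z := z) hγ0.le hγ1 hP.le hK hh1 hε0.le hε1 hKh hPh hρ hu huT
    hik hd
  refine ⟨hdef, (hF.one_add_abs_eulerScheme_le hγ0.le hP.le hK hKh hPh hu huT hik hd hdef).trans ?_⟩
  gcongr
  linarith

end IsFrozenIncrement

lemma one_add_abs_eulerScheme_le_of_doubling {F : ℝ → ℝ → ℝ → ℝ → ℝ} {h z : ℝ} {u : ℕ → ℝ}
    (hu : Monotone u) (hu0 : u 0 = 0) (hmesh : ∀ k, u (k + 1) - u k ≤ h / 2) (hh : 0 < h)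
    (hdouble : ∀ i k, i ≤ k → u k - u i ≤ h →
      1 + |eulerScheme F z u k| ≤ 2 * (1 + |eulerScheme F z u i|)) (n : ℕ) {k : ℕ}
    (hk : u k ≤ n * (h / 2)) : 1 + |eulerScheme F z u k| ≤ 2 ^ (n + 1) * (1 + |z|) := by
  induction n generalizing k with
  | zero =>
    have := hdouble 0 k k.zero_le (by rw [Nat.cast_zero, zero_mul] at hk; linarith)
    simpa [eulerScheme] using this
  | succ n ih =>
    push_cast at hk
    rcases le_or_gt (u k) (n * (h / 2)) with hkn | hkn
    · exact (ih hkn).trans (by gcongr <;> simp)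
    obtain ⟨m, -, hmk, hm, hm1⟩ := exists_le_le_succ_of_mem_Icc hu (i := 0) (k := k)
      (t := n * (h / 2)) (Nat.pos_of_ne_zero fun hk0 ↦ absurd hkn (by
        rw [hk0, hu0]
        exact not_lt.2 (by positivity))) ⟨hu0.trans_le (by positivity), hkn.le⟩
    calc 1 + |eulerScheme F z u k| ≤ 2 * (1 + |eulerScheme F z u m|) :=
          hdouble m k hmk.le (by linarith [hmesh m])
      _ ≤ 2 * (2 ^ (n + 1) * (1 + |z|)) := by
          gcongr
          exact ih hm
      _ = _ := by ring

lemma exists_one_add_abs_eulerScheme_le (F : ℝ → ℝ → ℝ → ℝ → ℝ) (T : ℝ) {h : ℝ} (hh : 0 < h)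
    (z : ℝ) : ∃ M, 0 ≤ M ∧ ∀ u : ℕ → ℝ, Monotone u → u 0 = 0 → (∀ k, u k ≤ T) →
      (∀ k, u (k + 1) - u k ≤ h / 2) → (∀ i k, i ≤ k → u k - u i ≤ h →
        1 + |eulerScheme F z u k| ≤ 2 * (1 + |eulerScheme F z u i|)) →
      ∀ k, 1 + |eulerScheme F z u k| ≤ M := by
  obtain ⟨n, hn⟩ := exists_nat_ge (T / (h / 2))
  refine ⟨2 ^ (n + 1) * (1 + |z|), by positivity, fun u hu hu0 huT hmesh hdouble k ↦ ?_⟩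
  exact one_add_abs_eulerScheme_le_of_doubling hu hu0 hmesh hh hdouble n
    ((huT k).trans ((div_le_iff₀ (by positivity)).1 hn))

end EulerScheme

section EulerLimit

lemma exists_partitions_with_nodes_tendsto {T : ℝ} (hT : 0 ≤ T) :
    ∃ u : ℕ → ℕ → ℝ, (∀ n, Monotone (u n)) ∧ (∀ n, u n 0 = 0) ∧ (∀ n k, u n k ∈ Icc 0 T) ∧
      (∀ δ > 0, ∀ᶠ n in atTop, ∀ k, u n (k + 1) - u n k ≤ δ) ∧
      ∀ t ∈ Icc 0 T, ∃ κ : ℕ → ℕ, (t = 0 → ∀ n, κ n = 0) ∧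
        Tendsto (fun n ↦ u n (κ n)) atTop (𝓝 t) := by
  have hmesh0 := tendsto_one_div_add_atTop_nhds_zero_nat (𝕜 := ℝ)
  choose u N hu hu0 huN hmem hmesh using
    fun n : ℕ ↦ exists_partition hT (Nat.one_div_pos_of_nat (α := ℝ) (n := n))
  refine ⟨u, hu, hu0, hmem, fun δ hδ ↦ ?_, fun t ht ↦ ?_⟩
  · filter_upwards [hmesh0.eventually_le_const hδ] with n hn k using (hmesh n k).trans hn
  rcases ht.1.eq_or_lt with rfl | ht0
  · exact ⟨fun _ ↦ 0, fun _ _ ↦ rfl, by simp [hu0]⟩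
  have hnode (n : ℕ) : ∃ k, |u n k - t| ≤ 1 / ((n : ℝ) + 1) := by
    have hN : 0 < N n := Nat.pos_of_ne_zero fun hN ↦ by linarith [hu0 n, huN n, hN ▸ huN n, ht.2]
    obtain ⟨m, -, -, hm, hm1⟩ := exists_le_le_succ_of_mem_Icc (hu n) hN
      (t := t) ⟨(hu0 n).trans_le ht.1, ht.2.trans_eq (huN n).symm⟩
    refine ⟨m, ?_⟩
    rw [abs_sub_comm, abs_of_nonneg (sub_nonneg.2 hm)]
    linarith [hmesh n m]
  choose κ hκ using hnode
  exact ⟨κ, fun h ↦ absurd h ht0.ne', tendsto_iff_dist_tendsto_zero.2 <|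
    squeeze_zero (fun _ ↦ dist_nonneg) hκ hmesh0⟩

lemma exists_tendsto_hyperfilter_of_eventually_abs_le {y : ℕ → ℝ} {M : ℝ}
    (hy : ∀ᶠ n in atTop, |y n| ≤ M) : ∃ c, |c| ≤ M ∧ Tendsto y (hyperfilter ℕ) (𝓝 c) := by
  obtain ⟨c, hc, hlim⟩ := (isCompact_Icc (a := -M) (b := M)).ultrafilter_le_nhds
    ((hyperfilter ℕ).map y) (le_principal_iff.2 <| mem_map.2 <| Nat.hyperfilter_le_atTop <|
      hy.mono fun n hn ↦ abs_le.1 hn)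
  exact ⟨c, abs_le.2 hc, hlim⟩

/-- The Euler polygons along finer and finer partitions are bounded, hence converge pointwise along
an ultrafilter, and the uniform local error estimate passes to the limit. -/
theorem IsFrozenIncrement.exists_limit {F : ℝ → ℝ → ℝ → ℝ → ℝ} {P γ T : ℝ}
    (hF : IsFrozenIncrement P γ T F)
    (hFc : ContinuousOn (fun p : ℝ × ℝ × ℝ × ℝ ↦ F p.1 p.2.1 p.2.2.1 p.2.2.2)
      (Icc 0 T ×ˢ univ ×ˢ Icc 0 T ×ˢ Icc 0 T))
    (hγ : 1 / 2 < γ) (hγ1 : γ ≤ 1) (hP : 0 < P) (hT : 0 ≤ T) (z : ℝ) :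
    ∃ (x : ℝ → ℝ) (K h M : ℝ), x 0 = z ∧ 0 ≤ K ∧ 0 < h ∧ h ≤ 1 ∧ (∀ t ∈ Icc 0 T, |x t| ≤ M) ∧
      ∀ s ∈ Icc 0 T, ∀ t ∈ Icc 0 T, s ≤ t → t - s ≤ h →
        |x t - x s - F s (x s) s t| ≤ K * (t - s) ^ (γ + γ) := by
  obtain ⟨K, h, hK, hh, hh1, hEuler⟩ := hF.exists_abs_eulerDefect_le hγ hγ1 hP
  obtain ⟨u, hu, hu0, huT, hmesh, hnodes⟩ := exists_partitions_with_nodes_tendsto hT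
  choose! κ hκ0 hκ using hnodes
  obtain ⟨M, hM0, hM⟩ := exists_one_add_abs_eulerScheme_le F T hh z
  have hbound : ∀ᶠ n in atTop, ∀ k, 1 + |eulerScheme F z (u n) k| ≤ M :=
    (hmesh (h / 2) (by positivity)).mono fun n hn ↦ hM (u n) (hu n) (hu0 n) (fun k ↦ (huT n k).2) hn
      fun i k hik hd ↦ (hEuler z (u n) (hu n) (huT n) i k hik hd).2
  have hlimit (t : ℝ) : ∃ c, |c| ≤ M ∧
      Tendsto (fun n ↦ eulerScheme F z (u n) (κ t n)) (hyperfilter ℕ) (𝓝 c) :=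
    exists_tendsto_hyperfilter_of_eventually_abs_le
      (hbound.mono fun n hn ↦ by linarith [hn (κ t n)])
  choose x hxM hx using hlimit
  refine ⟨x, K * M, h / 2, M, ?_, by positivity, by positivity, by linarith,
    fun t _ ↦ hxM t, fun s hs t ht hst hd ↦ ?_⟩
  · refine tendsto_nhds_unique (hx 0) ?_
    simp [hκ0 0 (left_mem_Icc.2 hT) rfl, eulerScheme]
  have hκs := (hκ s hs).mono_left Nat.hyperfilter_le_atTop
  have hκt := (hκ t ht).mono_left Nat.hyperfilter_le_atTop
  have hFlim : Tendsto (fun n ↦ F (u n (κ s n)) (eulerScheme F z (u n) (κ s n)) (u n (κ s n))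
      (u n (κ t n))) (hyperfilter ℕ) (𝓝 (F s (x s) s t)) :=
    (hFc (s, x s, s, t) ⟨hs, mem_univ _, hs, ht⟩).tendsto.comp <| tendsto_nhdsWithin_iff.2
      ⟨hκs.prodMk_nhds ((hx s).prodMk_nhds (hκs.prodMk_nhds hκt)),
        .of_forall fun n ↦ ⟨huT _ _, mem_univ _, huT _ _, huT _ _⟩⟩
  have hrate := ((hκt.sub hκs).rpow_const (p := γ + γ) (.inr (by linarith))).const_mul (K * M)
  have horder : ∀ᶠ n in hyperfilter ℕ, κ s n ≤ κ t n := by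
    rcases hst.eq_or_lt with rfl | hlt
    · exact .of_forall fun _ ↦ le_rfl
    · exact (hκs.eventually_lt hκt hlt).mono fun n hn ↦ ((hu n).reflect_lt hn).le
  refine le_of_tendsto_of_tendsto (((hx t).sub (hx s)).sub hFlim).abs hrate ?_
  filter_upwards [horder, (hκt.sub hκs).eventually_le_const (by linarith : t - s < h),
    Nat.hyperfilter_le_atTop hbound] with n hle hnear hMn
  have := sub_nonneg.2 (hu n hle)
  refine (hEuler z (u n) (hu n) (huT n) _ _ hle hnear).1.trans ?_
  gcongr
  exact hMn _

end EulerLimit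

section Existence

variable {b σ : ℝ → ℝ → ℝ} {g x : ℝ → ℝ} {T γ B S L D : ℝ}

/-- The increment of `dx = b dt + σ dg` with coefficients frozen at the state `(s, x)`. -/
def eulerIncrement (b σ : ℝ → ℝ → ℝ) (g : ℝ → ℝ) (s x t t' : ℝ) : ℝ :=
  b s x * (t' - t) + σ s x * (g t' - g t)

lemma abs_mul_sub_add_mul_sub_le {p q m n t t' : ℝ} (hγ : 0 ≤ γ) (hγ1 : γ ≤ 1) (hp : |p| ≤ m)
    (hq : |q| ≤ n) (hg : HolderBoundOn L γ g (Icc 0 T)) (ht : t ∈ Icc 0 T) (ht' : t' ∈ Icc 0 T)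
    (htt' : t ≤ t') :
    |p * (t' - t) + q * (g t' - g t)| ≤ (m * T ^ (1 - γ) + n * L) * (t' - t) ^ γ := by
  have hd : 0 ≤ t' - t := sub_nonneg.2 htt'
  have hm : 0 ≤ m := (abs_nonneg _).trans hp
  have hn : 0 ≤ n := (abs_nonneg _).trans hq
  calc |p * (t' - t) + q * (g t' - g t)| ≤ |p| * (t' - t) + |q| * |g t' - g t| := by
        simpa only [abs_mul, abs_of_nonneg hd] using abs_add_le (p * (t' - t)) (q * (g t' - g t))
    _ ≤ m * (T ^ (1 - γ) * (t' - t) ^ γ) + n * (L * (t' - t) ^ γ) := by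
        gcongr
        exacts [le_rpow_mul_rpow hd (by linarith [ht.1, ht'.2]) hγ hγ1, hg.le ht ht' htt']
    _ = _ := by ring

lemma exists_isFrozenIncrement_eulerIncrement (hT : 0 ≤ T) (hγ : 0 ≤ γ) (hγ1 : γ ≤ 1) (hL : 0 ≤ L)
    (hb : JointlyLipschitz B b) (hσ : JointlyLipschitz S σ) (hg : HolderBoundOn L γ g (Icc 0 T)) :
    ∃ P, 0 < P ∧ IsFrozenIncrement P γ T (eulerIncrement b σ g) := by
  obtain ⟨Mb, hMb⟩ := hb.exists_abs_le_mul_one_add_abs T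
  obtain ⟨Mσ, hMσ⟩ := hσ.exists_abs_le_mul_one_add_abs T
  have hB := hb.nonneg
  have hS := hσ.nonneg
  have hMb0 : 0 ≤ Mb := by simpa using (abs_nonneg _).trans (hMb 0 (left_mem_Icc.2 hT) 0)
  have hMσ0 : 0 ≤ Mσ := by simpa using (abs_nonneg _).trans (hMσ 0 (left_mem_Icc.2 hT) 0)
  refine ⟨(Mb + B) * T ^ (1 - γ) + (Mσ + S) * L + 1, by positivity,
    fun s hs t ht t' ht' htt' x ↦ ?_, fun s _ s' _ t ht t' ht' htt' x x' ↦ ?_,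
    fun s x t t' t'' ↦ ?_⟩
  · have := sub_nonneg.2 htt'
    calc _ ≤ (Mb * (1 + |x|) * T ^ (1 - γ) + Mσ * (1 + |x|) * L) * (t' - t) ^ γ :=
          abs_mul_sub_add_mul_sub_le hγ hγ1 (hMb s hs x) (hMσ s hs x) hg ht ht' htt'
      _ = (Mb * T ^ (1 - γ) + Mσ * L) * (1 + |x|) * (t' - t) ^ γ := by ring
      _ ≤ _ := by
          gcongr ?_ * _ * _
          nlinarith [mul_nonneg hB (Real.rpow_nonneg hT (1 - γ)), mul_nonneg hS hL]
  · have := sub_nonneg.2 htt'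
    calc |eulerIncrement b σ g s' x' t t' - eulerIncrement b σ g s x t t'|
        = |(b s' x' - b s x) * (t' - t) + (σ s' x' - σ s x) * (g t' - g t)| := by
          simp only [eulerIncrement]
          ring_nf
      _ ≤ (B * (|s' - s| + |x' - x|) * T ^ (1 - γ) + S * (|s' - s| + |x' - x|) * L) *
            (t' - t) ^ γ :=
          abs_mul_sub_add_mul_sub_le hγ hγ1 (hb _ _ _ _) (hσ _ _ _ _) hg ht ht' htt'
      _ = (B * T ^ (1 - γ) + S * L) * (|s' - s| + |x' - x|) * (t' - t) ^ γ := by ring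
      _ ≤ _ := by
          gcongr ?_ * _ * _
          nlinarith [mul_nonneg hMb0 (Real.rpow_nonneg hT (1 - γ)), mul_nonneg hMσ0 hL]
  · simp only [eulerIncrement]
    ring

lemma continuousOn_eulerIncrement (hb : JointlyLipschitz B b) (hσ : JointlyLipschitz S σ)
    (hg : ContinuousOn g (Icc 0 T)) :
    ContinuousOn (fun p : ℝ × ℝ × ℝ × ℝ ↦ eulerIncrement b σ g p.1 p.2.1 p.2.2.1 p.2.2.2)
      (Icc 0 T ×ˢ univ ×ˢ Icc 0 T ×ˢ Icc 0 T) := by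
  have hstate : Continuous fun p : ℝ × ℝ × ℝ × ℝ ↦ (p.1, p.2.1) := by fun_prop
  have hbc := (hb.continuous.comp hstate).continuousOn (s := Icc 0 T ×ˢ univ ×ˢ Icc 0 T ×ˢ Icc 0 T)
  have hσc := (hσ.continuous.comp hstate).continuousOn (s := Icc 0 T ×ˢ univ ×ˢ Icc 0 T ×ˢ Icc 0 T)
  have hgt := hg.comp (f := fun p : ℝ × ℝ × ℝ × ℝ ↦ p.2.2.1)
    (s := Icc 0 T ×ˢ univ ×ˢ Icc 0 T ×ˢ Icc 0 T) (by fun_prop) fun p hp ↦ hp.2.2.1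
  have hgt' := hg.comp (f := fun p : ℝ × ℝ × ℝ × ℝ ↦ p.2.2.2)
    (s := Icc 0 T ×ˢ univ ×ˢ Icc 0 T ×ˢ Icc 0 T) (by fun_prop) fun p hp ↦ hp.2.2.2
  exact (hbc.mul (by fun_prop)).add (hσc.mul (hgt'.sub hgt))

lemma abs_integral_sub_const_mul_le {f : ℝ → ℝ} {s t K : ℝ} (hst : s ≤ t) (ht1 : t - s ≤ 1)
    (hγ : 0 < γ) (hγ1 : γ ≤ 1) (hK : 0 ≤ K) (hf : HolderBoundOn K γ f (Icc s t)) :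
    |(∫ r in s..t, f r) - f s * (t - s)| ≤ K * (t - s) ^ (γ + γ) := by
  have hd : 0 ≤ t - s := sub_nonneg.2 hst
  have hint : IntervalIntegrable f volume s t :=
    ((hf.continuousOn hγ).mono (uIcc_of_le hst).subset).intervalIntegrable
  have hdiff : (∫ r in s..t, f r) - f s * (t - s) = ∫ r in s..t, (f r - f s) := by
    rw [integral_sub hint intervalIntegrable_const, intervalIntegral.integral_const, smul_eq_mul,
      mul_comm (t - s)]
  calc |(∫ r in s..t, f r) - f s * (t - s)| ≤ K * (t - s) ^ γ * |t - s| := by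
        rw [hdiff]
        refine intervalIntegral.norm_integral_le_of_norm_le_const (E := ℝ) fun r hr ↦ ?_
        rw [uIoc_of_le hst] at hr
        have hsr : 0 ≤ r - s := sub_nonneg.2 hr.1.le
        exact (hf.le (left_mem_Icc.2 hst) (Set.Ioc_subset_Icc_self hr) hr.1.le).trans
          (by gcongr; exact hr.2)
    _ ≤ K * (t - s) ^ γ * (t - s) ^ γ := by
        rw [abs_of_nonneg hd]
        gcongr
        exact Real.self_le_rpow_of_le_one hd ht1 hγ1
    _ = _ := by
        rw [Real.rpow_add_of_nonneg hd hγ.le hγ.le]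
        ring

theorem isYoungSolution_of_abs_sub_eulerIncrement_le {K h : ℝ} (hγ : 1 / 2 < γ) (hγ1 : γ ≤ 1)
    (hD : 0 ≤ D) (hK : 0 ≤ K) (hh : 0 < h) (hh1 : h ≤ 1) (hb : JointlyLipschitz B b)
    (hxD : HolderBoundOn D γ x (Icc 0 T))
    (hx : ∀ s ∈ Icc 0 T, ∀ t ∈ Icc 0 T, s ≤ t → t - s ≤ h →
      |x t - x s - eulerIncrement b σ g s (x s) s t| ≤ K * (t - s) ^ (γ + γ)) :
    IsYoungSolution b σ g (x 0) T x := by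
  intro t ht
  have hT : 0 ≤ T := ht.1.trans ht.2
  have hbx := hb.holderBoundOn_comp (by linarith) hγ1 hxD
  set Kb := B * ((T - 0) ^ (1 - γ) + D)
  have hKb : 0 ≤ Kb := mul_nonneg hb.nonneg (by rw [sub_zero]; positivity)
  set y : ℝ → ℝ := fun t ↦ x t - ∫ τ in (0 : ℝ)..t, b τ (x τ) with hy
  have hint {r : ℝ} (hr : r ∈ Icc 0 T) : IntervalIntegrable (fun τ ↦ b τ (x τ)) volume 0 r :=
    ((hbx.continuousOn (by linarith)).mono
      (uIcc_subset_Icc ⟨le_rfl, hr.1.trans hr.2⟩ hr)).intervalIntegrable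
  refine ⟨y t - y 0, isRSIntegral_of_local_expansion (add_nonneg hK hKb)
    (by linarith : 1 < γ + γ) hh fun r hr s hs hrs hd ↦ ?_, by simp only [hy, integral_same]; ring⟩
  replace hr : r ∈ Icc 0 T := ⟨hr.1, hr.2.trans ht.2⟩
  replace hs : s ∈ Icc 0 T := ⟨hs.1, hs.2.trans ht.2⟩
  have hdrift := abs_integral_sub_const_mul_le hrs (hd.trans hh1) (by linarith) hγ1 hKb
    (hbx.mono (Set.Icc_subset_Icc hr.1 hs.2))
  calc |y s - y r - σ r (x r) * (g s - g r)|
      = |(x s - x r - eulerIncrement b σ g r (x r) r s) -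
          ((∫ τ in r..s, b τ (x τ)) - b r (x r) * (s - r))| := by
        rw [← integral_interval_sub_left (hint hs) (hint hr)]
        simp only [hy, eulerIncrement]
        ring_nf
    _ ≤ K * (s - r) ^ (γ + γ) + Kb * (s - r) ^ (γ + γ) :=
        (abs_sub _ _).trans (add_le_add (hx r hr s hs hrs hd) hdrift)
    _ = _ := by ring

theorem exists_isYoungSolution (hT : 0 ≤ T) (hγ : 1 / 2 < γ) (hγ1 : γ ≤ 1) (hL : 0 ≤ L)
    (hb : JointlyLipschitz B b) (hσ : JointlyLipschitz S σ) (hg : HolderBoundOn L γ g (Icc 0 T))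
    (z : ℝ) : ∃ x D, 0 ≤ D ∧ HolderBoundOn D γ x (Icc 0 T) ∧ IsYoungSolution b σ g z T x := by
  have hγ0 : 0 < γ := by linarith
  obtain ⟨P, hP, hF⟩ := exists_isFrozenIncrement_eulerIncrement hT hγ0.le hγ1 hL hb hσ hg
  obtain ⟨x, K, h, M, rfl, hK, hh, hh1, hM, hx⟩ := hF.exists_limit
    (continuousOn_eulerIncrement hb hσ (hg.continuousOn hγ0)) hγ hγ1 hP hT z
  have hM0 : 0 ≤ M := (abs_nonneg _).trans (hM 0 (left_mem_Icc.2 hT))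
  have hxD : HolderBoundOn (K + P * (1 + M) + 2 * M / h ^ γ) γ x (Icc 0 T) := by
    refine .of_local_of_bounded hh hγ0 (by positivity) (fun s hs t ht hst hd ↦ ?_) hM
    have hd0 : 0 ≤ t - s := sub_nonneg.2 hst.le
    calc |x t - x s| = |(x t - x s - eulerIncrement b σ g s (x s) s t) +
          eulerIncrement b σ g s (x s) s t| := by rw [sub_add_cancel]
      _ ≤ K * (t - s) ^ (γ + γ) + P * (1 + |x s|) * (t - s) ^ γ :=
          (abs_add_le _ _).trans
            (add_le_add (hx s hs t ht hst.le hd) (hF.growth s hs s hs t ht hst.le (x s)))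
      _ ≤ K * (1 ^ γ * (t - s) ^ γ) + P * (1 + M) * (t - s) ^ γ := by
          gcongr
          exacts [rpow_add_le_mul_rpow hd0 (hd.trans hh1) hγ0.le hγ0.le, hM s hs]
      _ = _ := by
          rw [Real.one_rpow]
          ring
  exact ⟨x, _, by positivity, hxD,
    isYoungSolution_of_abs_sub_eulerIncrement_le hγ hγ1 (by positivity) hK hh hh1 hb hxD hx⟩

end Existence

theorem youngEquation_existence_uniqueness {b σ σx : ℝ → ℝ → ℝ} {g : ℝ → ℝ} {T β γ B S S' L : ℝ}
    (hT : 0 ≤ T) (hγ : 1 / 2 < γ) (hγ1 : γ ≤ 1) (hβγ : 1 < β + γ) (hβ : β ≤ γ) (hL : 0 ≤ L)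
    (hb : JointlyLipschitz B b) (hσ : JointlyLipschitz S σ)
    (hσx : ∀ t x, HasDerivAt (fun y ↦ σ t y) (σx t x) x) (hσxL : JointlyLipschitz S' σx)
    (hg : HolderBoundOn L γ g (Icc 0 T)) (z : ℝ) :
    (∃ x, (∃ K, HolderBoundOn K β x (Icc 0 T)) ∧ IsYoungSolution b σ g z T x) ∧
      ∀ x y, (∃ K, HolderBoundOn K β x (Icc 0 T)) ∧ IsYoungSolution b σ g z T x →
        (∃ K, HolderBoundOn K β y (Icc 0 T)) ∧ IsYoungSolution b σ g z T y →
        EqOn x y (Icc 0 T) := by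
  have hβ0 : 0 < β := by linarith
  constructor
  · obtain ⟨x, D, hD, hxD, hx⟩ := exists_isYoungSolution hT hγ hγ1 hL hb hσ hg z
    exact ⟨x, ⟨_, hxD.mono_exponent hD hβ0.le hβ⟩, hx⟩
  · rintro x y ⟨⟨Kx, hxK⟩, hx⟩ ⟨⟨Ky, hyK⟩, hy⟩
    have hregular {v : ℝ → ℝ} {K : ℝ} (hv : IsYoungSolution b σ g z T v)
        (hvK : HolderBoundOn K β v (Icc 0 T)) : ∃ D, HolderBoundOn D γ v (Icc 0 T) :=
      hv.exists_holderBoundOn hβ0 (hβ.trans hγ1) (by linarith) hγ1 hβγ (abs_nonneg K) hL hb hσ hg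
        (hvK.mono_const (le_abs_self K))
    obtain ⟨Dx, hxD⟩ := hregular hx hxK
    obtain ⟨Dy, hyD⟩ := hregular hy hyK
    exact hx.eqOn hy hγ hγ1 (le_max_of_le_right (abs_nonneg Dx) : 0 ≤ max Dy |Dx|) hL hb hσ hσx hσxL
      hg (hxD.mono_const ((le_abs_self Dx).trans (le_max_right _ _)))
      (hyD.mono_const (le_max_left _ _))

section DyadicChaining

/-- The largest multiple of `2⁻ⁿ` not exceeding `s ≥ 0`. -/
noncomputable def dyadicFloor (n : ℕ) (s : ℝ) : ℝ := ⌊s * 2 ^ n⌋₊ / 2 ^ n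

lemma dyadicFloor_le {s : ℝ} (hs : 0 ≤ s) (n : ℕ) : dyadicFloor n s ≤ s := by
  rw [dyadicFloor, div_le_iff₀ (by positivity)]
  exact Nat.floor_le (by positivity)

lemma sub_le_dyadicFloor (n : ℕ) (s : ℝ) : s - (1 / 2) ^ n ≤ dyadicFloor n s := by
  rw [dyadicFloor, le_div_iff₀ (by positivity), sub_mul, ← mul_pow, one_div,
    inv_mul_cancel₀ two_ne_zero, one_pow]
  linarith [Nat.lt_floor_add_one (s * 2 ^ n)]

lemma dyadicFloor_mem_Icc {s : ℝ} (hs : s ∈ Icc (0 : ℝ) 1) (n : ℕ) :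
    dyadicFloor n s ∈ Icc (0 : ℝ) 1 :=
  ⟨by rw [dyadicFloor]; positivity, (dyadicFloor_le hs.1 n).trans hs.2⟩

lemma tendsto_dyadicFloor {s : ℝ} (hs : 0 ≤ s) :
    Tendsto (fun n ↦ dyadicFloor n s) atTop (𝓝 s) := by
  have hpow : Tendsto (fun n : ℕ ↦ (1 / 2 : ℝ) ^ n) atTop (𝓝 0) :=
    tendsto_pow_atTop_nhds_zero_of_lt_one (by norm_num) (by norm_num)
  exact tendsto_of_tendsto_of_tendsto_of_le_of_le (by simpa using tendsto_const_nhds.sub hpow)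
    tendsto_const_nhds (fun n ↦ sub_le_dyadicFloor n s) (dyadicFloor_le hs)

lemma floor_mul_two_pow_le {s : ℝ} (hs : s ≤ 1) (n : ℕ) : ⌊s * 2 ^ n⌋₊ ≤ 2 ^ n := by
  apply Nat.floor_le_of_le
  push_cast
  exact mul_le_of_le_one_left (by positivity) hs

variable {E : Type*} [PseudoMetricSpace E] {f : ℝ → E} {A r : ℝ}

lemma dist_le_of_adjacent_dyadic (hA : 0 ≤ A) (hr : 0 ≤ r)
    (hf : ∀ n k : ℕ, k < 2 ^ n → dist (f (k / 2 ^ n)) (f ((k + 1) / 2 ^ n)) ≤ A * r ^ n)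
    {n k l : ℕ} (hkl : k ≤ l) (hlk : l ≤ k + 1) (hl : l ≤ 2 ^ n) :
    dist (f (k / 2 ^ n)) (f (l / 2 ^ n)) ≤ A * r ^ n := by
  obtain rfl | rfl : l = k ∨ l = k + 1 := by omega
  · simpa using by positivity
  · exact_mod_cast hf n k hl

lemma dist_dyadicFloor_succ_le (hA : 0 ≤ A) (hr : 0 ≤ r)
    (hf : ∀ n k : ℕ, k < 2 ^ n → dist (f (k / 2 ^ n)) (f ((k + 1) / 2 ^ n)) ≤ A * r ^ n)
    {s : ℝ} (hs : s ≤ 1) (n : ℕ) :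
    dist (f (dyadicFloor n s)) (f (dyadicFloor (n + 1) s)) ≤ A * r * r ^ n := by
  set l := ⌊s * 2 ^ (n + 1)⌋₊
  have hhalf : ⌊s * 2 ^ n⌋₊ = l / 2 := by
    rw [← Nat.floor_div_natCast]
    congr 1
    push_cast
    ring
  have hcoarse : dyadicFloor n s = ((2 * (l / 2) : ℕ) : ℝ) / 2 ^ (n + 1) := by
    rw [dyadicFloor, hhalf, pow_succ', Nat.cast_mul, Nat.cast_two, mul_div_mul_left _ _ two_ne_zero]
  rw [hcoarse, mul_assoc, ← pow_succ']
  exact dist_le_of_adjacent_dyadic hA hr hf (by omega) (by omega) (floor_mul_two_pow_le hs _)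

lemma dist_dyadicFloor_le (hA : 0 ≤ A) (hr : 0 ≤ r) (hr1 : r < 1)
    (hf : ∀ n k : ℕ, k < 2 ^ n → dist (f (k / 2 ^ n)) (f ((k + 1) / 2 ^ n)) ≤ A * r ^ n)
    (hcont : ContinuousOn f (Icc 0 1)) {s : ℝ} (hs : s ∈ Icc (0 : ℝ) 1) (n : ℕ) :
    dist (f (dyadicFloor n s)) (f s) ≤ A * r * r ^ n / (1 - r) := by
  have hlim : Tendsto (fun n ↦ dyadicFloor n s) atTop (𝓝[Icc 0 1] s) :=
    tendsto_nhdsWithin_iff.2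
      ⟨tendsto_dyadicFloor hs.1, Eventually.of_forall (dyadicFloor_mem_Icc hs)⟩
  exact dist_le_of_le_geometric_of_tendsto r _ hr1 (dist_dyadicFloor_succ_le hA hr hf hs.2)
    ((hcont s hs).tendsto.comp hlim) n

lemma dist_le_of_dyadic_increments (hA : 0 ≤ A) (hr : 0 ≤ r) (hr1 : r < 1)
    (hf : ∀ n k : ℕ, k < 2 ^ n → dist (f (k / 2 ^ n)) (f ((k + 1) / 2 ^ n)) ≤ A * r ^ n)
    (hcont : ContinuousOn f (Icc 0 1)) {s t : ℝ} (hs : s ∈ Icc (0 : ℝ) 1)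
    (ht : t ∈ Icc (0 : ℝ) 1) (hst : s ≤ t) {n : ℕ} (hn : t - s ≤ (1 / 2) ^ n) :
    dist (f s) (f t) ≤ (2 * (A * r / (1 - r)) + A) * r ^ n := by
  have hadj : ⌊t * 2 ^ n⌋₊ ≤ ⌊s * 2 ^ n⌋₊ + 1 := by
    have hstep : t * 2 ^ n ≤ s * 2 ^ n + 1 := by
      calc t * 2 ^ n ≤ (s + (1 / 2) ^ n) * 2 ^ n := by gcongr; linarith
        _ = s * 2 ^ n + 1 := by rw [add_mul, ← mul_pow]; norm_num
    exact (Nat.floor_mono hstep).trans_eq (Nat.floor_add_one (by have := hs.1; positivity))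
  have hmid : dist (f (dyadicFloor n s)) (f (dyadicFloor n t)) ≤ A * r ^ n :=
    dist_le_of_adjacent_dyadic hA hr hf (Nat.floor_mono (by gcongr)) hadj
      (floor_mul_two_pow_le ht.2 n)
  have hleft := dist_dyadicFloor_le hA hr hr1 hf hcont hs n
  rw [dist_comm] at hleft
  calc dist (f s) (f t) ≤ _ := dist_triangle4 _ (f (dyadicFloor n s)) (f (dyadicFloor n t)) _
    _ ≤ A * r * r ^ n / (1 - r) + A * r ^ n + A * r * r ^ n / (1 - r) := by
      gcongr
      exact dist_dyadicFloor_le hA hr hr1 hf hcont ht n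
    _ = _ := by ring

theorem exists_holder_of_dyadic_increments {γ : ℝ} (hγ : 0 < γ) (hA : 0 ≤ A)
    (hf : ∀ n k : ℕ, k < 2 ^ n →
      dist (f (k / 2 ^ n)) (f ((k + 1) / 2 ^ n)) ≤ A * ((1 / 2) ^ γ) ^ n)
    (hcont : ContinuousOn f (Icc 0 1)) :
    ∃ L : ℝ, ∀ s ∈ Icc (0 : ℝ) 1, ∀ t ∈ Icc (0 : ℝ) 1, dist (f s) (f t) ≤ L * dist s t ^ γ := by
  set r : ℝ := (1 / 2) ^ γ with hr_def
  have hr : 0 < r := by positivity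
  have hr1 : r < 1 := Real.rpow_lt_one (by norm_num) (by norm_num) hγ
  set B : ℝ := 2 * (A * r / (1 - r)) + A
  have : 0 ≤ B := by
    have := sub_pos.2 hr1
    positivity
  have hlt {s t : ℝ} (hs : s ∈ Icc (0 : ℝ) 1) (ht : t ∈ Icc (0 : ℝ) 1) (hst : s < t) :
      dist (f s) (f t) ≤ B / r * (t - s) ^ γ := by
    obtain ⟨n, hn, hn'⟩ := exists_nat_pow_near_of_lt_one (sub_pos.2 hst)
      (by linarith [hs.1, ht.2]) (by norm_num) (by norm_num : (1 / 2 : ℝ) < 1)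
    have hscale : r ^ (n + 1) ≤ (t - s) ^ γ := by
      rw [hr_def, ← Real.rpow_mul_natCast (by norm_num), mul_comm,
        Real.rpow_natCast_mul (by norm_num)]
      exact Real.rpow_le_rpow (by positivity) hn.le hγ.le
    calc dist (f s) (f t) ≤ B * r ^ n :=
          dist_le_of_dyadic_increments hA hr.le hr1 hf hcont hs ht hst.le hn'
      _ = B / r * r ^ (n + 1) := by rw [pow_succ]; field_simp
      _ ≤ B / r * (t - s) ^ γ := by gcongr
  refine ⟨B / r, fun s hs t ht ↦ ?_⟩
  rcases lt_trichotomy s t with hst | rfl | hst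
  · rw [dist_comm s t, Real.dist_eq, abs_of_pos (sub_pos.2 hst)]
    exact hlt hs ht hst
  · simp [Real.zero_rpow hγ.ne']
  · rw [dist_comm (f s), Real.dist_eq, abs_of_pos (sub_pos.2 hst)]
    exact hlt ht hs hst

end DyadicChaining

section KolmogorovProcess

variable {Ω E : Type*} [MeasurableSpace Ω] [PseudoMetricSpace E] {P : Measure Ω}
  {X : ℝ → Ω → E} {p q T γ : ℝ} {M : ℝ≥0}

lemma ae_exists_forall_le_of_tsum_lintegral_ne_top {ι : Type*} [Countable ι]
    {F : ι → Ω → ℝ≥0∞} (hF : ∀ i, Measurable (F i)) (hsum : ∑' i, ∫⁻ ω, F i ω ∂P ≠ ∞) :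
    ∀ᵐ ω ∂P, ∃ Y, Y ≠ ∞ ∧ ∀ i, F i ω ≤ Y := by
  rw [← lintegral_tsum fun i ↦ (hF i).aemeasurable] at hsum
  filter_upwards [ae_lt_top (Measurable.tsum hF) hsum] with ω hω
  exact ⟨_, hω.ne, ENNReal.le_tsum⟩

lemma dyadic_grid_mem_Icc (hT : 0 ≤ T) {n k : ℕ} (hk : k ≤ 2 ^ n) :
    T * (k / 2 ^ n) ∈ Icc 0 T := by
  have hk' : (k : ℝ) / 2 ^ n ≤ 1 := (div_le_one (by positivity)).2 (mod_cast hk)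
  exact ⟨by positivity, mul_le_of_le_one_right hT hk'⟩

lemma dyadic_grid_succ_mem_Icc (hT : 0 ≤ T) {n k : ℕ} (hk : k < 2 ^ n) :
    T * ((k + 1) / 2 ^ n) ∈ Icc 0 T := by
  exact_mod_cast dyadic_grid_mem_Icc hT (Nat.succ_le_of_lt hk)

lemma lintegral_dyadic_increment_le (hT : 0 ≤ T)
    (hX : IsKolmogorovProcess (fun t : Icc 0 T ↦ X t) P p q M) {n k : ℕ} (hk : k < 2 ^ n) :
    ∫⁻ ω, edist (X (T * (k / 2 ^ n)) ω) (X (T * ((k + 1) / 2 ^ n)) ω) ^ p ∂P ≤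
      M * ENNReal.ofReal T ^ q * ((2⁻¹ : ℝ≥0∞) ^ q) ^ n := by
  have hstep : edist (T * (k / 2 ^ n : ℝ)) (T * ((k + 1) / 2 ^ n)) =
      ENNReal.ofReal T * 2⁻¹ ^ n := by
    rw [edist_comm, edist_dist, Real.dist_eq, ← mul_sub, ← sub_div, add_sub_cancel_left,
      abs_of_nonneg (by positivity), ENNReal.ofReal_mul hT, one_div,
      ENNReal.ofReal_inv_of_pos (by positivity), ENNReal.ofReal_pow zero_le_two,
      ENNReal.ofReal_ofNat, ENNReal.inv_pow]
  have hK := hX.kolmogorovCondition ⟨_, dyadic_grid_mem_Icc hT hk.le⟩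
    ⟨_, dyadic_grid_succ_mem_Icc hT hk⟩
  rw [Subtype.edist_mk_mk, hstep, ENNReal.mul_rpow_of_nonneg _ _ hX.q_pos.le, ← mul_assoc,
    ← ENNReal.rpow_natCast, ← ENNReal.rpow_mul, mul_comm (n : ℝ), ENNReal.rpow_mul,
    ENNReal.rpow_natCast] at hK
  exact hK

lemma ae_exists_weighted_dyadic_increments_le (hT : 0 ≤ T)
    (hX : IsKolmogorovProcess (fun t : Icc 0 T ↦ X t) P p q M) (hq : 1 + γ * p < q) :
    ∀ᵐ ω ∂P, ∃ Y, Y ≠ ∞ ∧ ∀ n k : ℕ, k < 2 ^ n → ((2 : ℝ≥0∞) ^ (γ * p)) ^ n *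
      edist (X (T * (k / 2 ^ n)) ω) (X (T * ((k + 1) / 2 ^ n)) ω) ^ p ≤ Y := by
  set a : ℝ≥0∞ := 2 ^ (γ * p)
  let F : (Σ n : ℕ, Fin (2 ^ n)) → Ω → ℝ≥0∞ := fun i ω ↦ a ^ i.1 *
    edist (X (T * (i.2 / 2 ^ i.1)) ω) (X (T * ((i.2 + 1) / 2 ^ i.1)) ω) ^ p
  have hF (i) : Measurable (F i) :=
    ((hX.measurable_edist (s := ⟨_, dyadic_grid_mem_Icc hT i.2.2.le⟩)
      (t := ⟨_, dyadic_grid_succ_mem_Icc hT i.2.2⟩)).pow_const p).const_mul _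
  have hratio : 2 * a * 2⁻¹ ^ q < 1 := by
    have : 2 * a * 2⁻¹ ^ q = 2 ^ (1 + γ * p - q) := by
      rw [ENNReal.rpow_sub _ _ two_ne_zero ENNReal.ofNat_ne_top,
        ENNReal.rpow_add _ _ two_ne_zero ENNReal.ofNat_ne_top, ENNReal.rpow_one, ENNReal.inv_rpow,
        div_eq_mul_inv]
    rw [this]
    exact ENNReal.rpow_lt_one_of_one_lt_of_neg ENNReal.one_lt_two (by linarith)
  have hlevel (n : ℕ) : ∑ k : Fin (2 ^ n), ∫⁻ ω, F ⟨n, k⟩ ω ∂P ≤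
      M * ENNReal.ofReal T ^ q * (2 * a * 2⁻¹ ^ q) ^ n := by
    calc _ ≤ ∑ _k : Fin (2 ^ n), a ^ n * (M * ENNReal.ofReal T ^ q * (2⁻¹ ^ q) ^ n) := by
          refine Finset.sum_le_sum fun k _ ↦ ?_
          rw [lintegral_const_mul' _ _ (ENNReal.pow_ne_top
            (ENNReal.rpow_ne_top_of_ne_zero two_ne_zero ENNReal.ofNat_ne_top))]
          gcongr
          exact lintegral_dyadic_increment_le hT hX k.2
      _ = _ := by
          rw [Finset.sum_const, Finset.card_univ, Fintype.card_fin, nsmul_eq_mul]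
          push_cast
          ring
  have hsum : ∑' i, ∫⁻ ω, F i ω ∂P < ∞ := by
    rw [ENNReal.tsum_sigma']
    simp_rw [tsum_fintype]
    refine (ENNReal.tsum_le_tsum hlevel).trans_lt ?_
    rw [ENNReal.tsum_mul_left, ENNReal.tsum_geometric]
    exact ENNReal.mul_lt_top (ENNReal.mul_lt_top ENNReal.coe_lt_top
      (ENNReal.rpow_lt_top_of_nonneg hX.q_pos.le ENNReal.ofReal_ne_top))
      (ENNReal.inv_lt_top.2 (tsub_pos_of_lt hratio))
  filter_upwards [ae_exists_forall_le_of_tsum_lintegral_ne_top hF hsum.ne] with ω ⟨Y, hY, hle⟩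
  exact ⟨Y, hY, fun n k hk ↦ hle ⟨n, k, hk⟩⟩

lemma ae_exists_dyadic_increments_le (hT : 0 ≤ T)
    (hX : IsKolmogorovProcess (fun t : Icc 0 T ↦ X t) P p q M) (hq : 1 + γ * p < q) :
    ∀ᵐ ω ∂P, ∃ A : ℝ, 0 ≤ A ∧ ∀ n k : ℕ, k < 2 ^ n →
      dist (X (T * (k / 2 ^ n)) ω) (X (T * ((k + 1) / 2 ^ n)) ω) ≤ A * ((1 / 2) ^ γ) ^ n := by
  filter_upwards [ae_exists_weighted_dyadic_increments_le hT hX hq] with ω ⟨Y, hY, hle⟩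
  refine ⟨(Y ^ p⁻¹).toReal, ENNReal.toReal_nonneg, fun n k hk ↦ ?_⟩
  have hp := hX.p_pos
  have hroot := ENNReal.rpow_le_rpow (hle n k hk) (inv_pos.2 hp).le
  rw [ENNReal.mul_rpow_of_nonneg _ _ (inv_pos.2 hp).le, ENNReal.rpow_rpow_inv hp.ne',
    ← ENNReal.rpow_natCast, ← ENNReal.rpow_mul, ← ENNReal.rpow_mul,
    show γ * p * (n * p⁻¹) = γ * n by field_simp, edist_dist] at hroot
  have hreal := ENNReal.toReal_mono (ENNReal.rpow_ne_top_of_nonneg (inv_pos.2 hp).le hY) hroot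
  rw [ENNReal.toReal_mul, ENNReal.toReal_ofReal dist_nonneg, ← ENNReal.toReal_rpow,
    ENNReal.toReal_ofNat] at hreal
  rwa [← Real.rpow_mul_natCast (by norm_num), one_div, Real.inv_rpow zero_le_two,
    ← div_eq_mul_inv, le_div_iff₀ (by positivity), mul_comm]

-- The Hölder half of the Kolmogorov–Chentsov theorem; Mathlib only has the moment condition.
theorem ae_exists_holder_of_isKolmogorovProcess (hT : 0 < T)
    (hX : IsKolmogorovProcess (fun t : Icc 0 T ↦ X t) P p q M) (hγ : 0 < γ) (hq : 1 + γ * p < q)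
    (hcont : ∀ᵐ ω ∂P, ContinuousOn (X · ω) (Icc 0 T)) :
    ∀ᵐ ω ∂P, ∃ L : ℝ, ∀ s ∈ Icc 0 T, ∀ t ∈ Icc 0 T,
      dist (X s ω) (X t ω) ≤ L * dist s t ^ γ := by
  filter_upwards [ae_exists_dyadic_increments_le hT.le hX hq, hcont] with ω ⟨A, hA, hle⟩ hω
  have hscale : ContinuousOn (fun u ↦ X (T * u) ω) (Icc 0 1) :=
    hω.comp (by fun_prop) fun u hu ↦ ⟨mul_nonneg hT.le hu.1, mul_le_of_le_one_right hT.le hu.2⟩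
  obtain ⟨L, hL⟩ := exists_holder_of_dyadic_increments hγ hA hle hscale
  have hunit {s : ℝ} (hs : s ∈ Icc 0 T) : s / T ∈ Icc (0 : ℝ) 1 :=
    ⟨div_nonneg hs.1 hT.le, (div_le_one hT).2 hs.2⟩
  refine ⟨L / T ^ γ, fun s hs t ht ↦ ?_⟩
  have h := hL _ (hunit hs) _ (hunit ht)
  rw [mul_div_cancel₀ _ hT.ne', mul_div_cancel₀ _ hT.ne'] at h
  refine h.trans_eq ?_
  rw [Real.dist_eq, Real.dist_eq, ← sub_div, abs_div, abs_of_pos hT,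
    Real.div_rpow (abs_nonneg _) hT.le]
  ring

theorem ae_exists_holderBoundOn {ξ : ℝ → Ω → ℝ} {H : ℝ} (hT : 0 < T)
    (hξ : ∀ p : ℝ, 0 < p → ∃ M, IsKolmogorovProcess (fun t : Icc 0 T ↦ ξ t) P p (H * p) M)
    (hcont : ∀ᵐ ω ∂P, ContinuousOn (ξ · ω) (Icc 0 T)) (hγ : 0 < γ) (hγH : γ < H) :
    ∀ᵐ ω ∂P, ∃ L, 0 ≤ L ∧ HolderBoundOn L γ (ξ · ω) (Icc 0 T) := by
  obtain ⟨p, hp⟩ := exists_gt (H - γ)⁻¹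
  have hgap : 0 < H - γ := sub_pos.2 hγH
  obtain ⟨M, hM⟩ := hξ p ((inv_pos.2 hgap).trans hp)
  have hexp : 1 < (H - γ) * p := (inv_lt_iff_one_lt_mul₀' hgap).1 hp
  filter_upwards [ae_exists_holder_of_isKolmogorovProcess hT hM hγ (by linarith) hcont]
    with ω ⟨L, hL⟩
  have hholder : HolderBoundOn L γ (ξ · ω) (Icc 0 T) := fun s hs t ht ↦ hL t ht s hs
  exact ⟨|L|, abs_nonneg L, hholder.mono_const (le_abs_self L)⟩

end KolmogorovProcess

section FractionalBrownianMotion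

variable {Ω : Type*} [MeasurableSpace Ω] {P : Measure Ω} {ξ : ℝ → Ω → ℝ} {α C p : ℝ}

lemma lintegral_enorm_rpow_gaussianReal_zero (hp : 0 ≤ p) (v : ℝ≥0) :
    ∫⁻ x, ‖x‖ₑ ^ p ∂(gaussianReal 0 v) =
      (v : ℝ≥0∞) ^ (p / 2) * ∫⁻ x, ‖x‖ₑ ^ p ∂(gaussianReal 0 1) := by
  have hscale := gaussianReal_map_const_mul (μ := 0) (v := 1) (NNReal.sqrt v : ℝ)
  have hvar : NNReal.mk ((NNReal.sqrt v : ℝ) ^ 2) (sq_nonneg _) * 1 = v := by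
    rw [mul_one]
    exact NNReal.eq (by simp)
  have hmeas : Measurable fun x : ℝ ↦ ‖x‖ₑ ^ p := by fun_prop
  rw [mul_zero, hvar] at hscale
  rw [← hscale, lintegral_map hmeas (by fun_prop), ← lintegral_const_mul _ hmeas]
  refine lintegral_congr fun x ↦ ?_
  rw [enorm_mul, ENNReal.mul_rpow_of_nonneg _ _ hp, NNReal.enorm_eq,
    ← ENNReal.coe_rpow_of_nonneg _ hp, ← ENNReal.coe_rpow_of_nonneg _ (by positivity),
    NNReal.sqrt_eq_rpow, ← NNReal.rpow_mul, one_div_mul_eq_div]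

lemma lintegral_enorm_rpow_gaussianReal_lt_top (hp : 0 < p) :
    ∫⁻ x, ‖x‖ₑ ^ p ∂(gaussianReal 0 1) < ∞ := by
  have h := lintegral_rpow_enorm_lt_top_of_eLpNorm_lt_top (p := ENNReal.ofReal p)
    (by simpa using hp) ENNReal.ofReal_ne_top
    (memLp_id_gaussianReal' (μ := 0) (v := 1) _ ENNReal.ofReal_ne_top).eLpNorm_lt_top
  simpa only [ENNReal.toReal_ofReal hp.le, id_eq] using h

namespace IsFBM

lemma map_sub_eq_gaussianReal (hξ : IsFBM P ξ α C) (hα : -1 < α) {s t : ℝ} (hs : 0 ≤ s)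
    (ht : 0 ≤ t) :
    P.map (fun ω ↦ ξ s ω - ξ t ω) = gaussianReal 0 (|s - t| ^ (1 + α) * (2 * C)).toNNReal := by
  have h := hξ.2 2 ![s, t] (Fin.forall_fin_two.2 ⟨hs, ht⟩) ![1, -1]
  simp only [Fin.sum_univ_two, Matrix.cons_val_zero, Matrix.cons_val_one, one_mul, neg_mul,
    ← sub_eq_add_neg, sub_self, abs_zero, Real.zero_rpow (by linarith : 1 + α ≠ 0),
    abs_sub_comm t s] at h
  rw [h]
  congr 2
  ring

theorem exists_isKolmogorovProcess (hξ : IsFBM P ξ α C) (hα : -1 < α) (hp : 0 < p) :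
    ∃ M : ℝ≥0, ∀ T : ℝ,
      IsKolmogorovProcess (fun t : Icc 0 T ↦ ξ t) P p ((1 + α) / 2 * p) M := by
  obtain ⟨m, hm, -⟩ := ENNReal.lt_iff_exists_coe.1 (lintegral_enorm_rpow_gaussianReal_lt_top hp)
  have hα' : 0 < 1 + α := by linarith
  refine ⟨(2 * C).toNNReal ^ (p / 2) * m, fun T ↦
    IsKolmogorovProcess.mk_of_secondCountableTopology (fun t ↦ hξ.1 t) (fun s t ↦ ?_) hp
      (by positivity)⟩
  refine le_of_eq ?_
  calc ∫⁻ ω, edist (ξ s ω) (ξ t ω) ^ p ∂P = ∫⁻ x, ‖x‖ₑ ^ p ∂(P.map fun ω ↦ ξ s ω - ξ t ω) := by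
        simp_rw [edist_eq_enorm_sub]
        exact (lintegral_map (f := fun x : ℝ ↦ ‖x‖ₑ ^ p) (by fun_prop)
          ((hξ.1 s).sub (hξ.1 t))).symm
    _ = (|(s : ℝ) - t| ^ (1 + α) * (2 * C)).toNNReal ^ (p / 2) * m := by
        rw [map_sub_eq_gaussianReal hξ hα s.2.1 t.2.1,
          lintegral_enorm_rpow_gaussianReal_zero hp.le, hm]
    _ = ((2 * C).toNNReal ^ (p / 2) * m : ℝ≥0) * edist s t ^ ((1 + α) / 2 * p) := by
        rw [div_mul_eq_mul_div, mul_div_assoc, Real.toNNReal_mul (by positivity),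
          Real.toNNReal_rpow_of_nonneg (abs_nonneg _),
          ← Real.dist_eq, ← Subtype.dist_eq, edist_dist, ENNReal.ofReal, ENNReal.rpow_mul,
          ← ENNReal.coe_rpow_of_nonneg _ hα'.le, ← ENNReal.coe_rpow_of_nonneg _ (by positivity),
          ← ENNReal.coe_rpow_of_nonneg _ (by positivity), NNReal.mul_rpow]
        push_cast
        ring

end IsFBM

end FractionalBrownianMotion

/-- `H` is the Hurst parameter, equal to `(1 + α) / 2` for fractional Brownian motion. -/
theorem fbm_sde_existence_uniqueness_general {Ω : Type*} [MeasurableSpace Ω] (P : Measure Ω)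
    (ξ : ℝ → Ω → ℝ) (b σ σx : ℝ → ℝ → ℝ) (Z : Ω → ℝ) (H β T : ℝ) (hH : H ≤ 1) (hβ : 1 - H < β)
    (hβH : β < H) (hT : 0 < T)
    (hξ : ∀ p : ℝ, 0 < p → ∃ M, IsKolmogorovProcess (fun t : Icc 0 T ↦ ξ t) P p (H * p) M)
    (hcont : ∀ᵐ ω ∂P, ContinuousOn (ξ · ω) (Icc 0 T)) (hb : ∃ B, JointlyLipschitz B b)
    (hσdx : ∀ t x, HasDerivAt (fun y ↦ σ t y) (σx t x) x) (hσ : ∃ S, JointlyLipschitz S σ)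
    (hσx : ∃ S, JointlyLipschitz S σx) :
    ∀ᵐ ω ∂P,
      (∃ x : ℝ → ℝ, IsPathwiseSolution b σ ξ Z T β ω x) ∧
      (∀ x y : ℝ → ℝ, IsPathwiseSolution b σ ξ Z T β ω x →
        IsPathwiseSolution b σ ξ Z T β ω y → EqOn x y (Icc 0 T)) := by
  obtain ⟨B, hB⟩ := hb
  obtain ⟨S, hS⟩ := hσ
  obtain ⟨S', hS'⟩ := hσx
  obtain ⟨γ, hγ, hγH⟩ : ∃ γ, max (1 / 2) (max (1 - β) β) < γ ∧ γ < H :=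
    exists_between (max_lt (by linarith) (max_lt (by linarith) hβH))
  simp only [max_lt_iff] at hγ
  obtain ⟨hγ2, hβγ, hβ_lt⟩ := hγ
  filter_upwards [ae_exists_holderBoundOn hT hξ hcont (by linarith) hγH] with ω ⟨L, hL, hgL⟩
  exact youngEquation_existence_uniqueness hT.le hγ2 (by linarith) (by linarith) hβ_lt.le hL hB hS
    hσdx hS' hgL (Z ω)

/-- Existence and uniqueness, with probability 1, of solutions in `C^β([0,T])`
of the pathwise SDE driven by fractional Brownian motion. -/
theorem fbm_sde_existence_uniqueness
    {Ω : Type*} [MeasurableSpace Ω] (P : Measure Ω) [IsProbabilityMeasure P]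
    (ξ : ℝ → Ω → ℝ) (b σ σt σx : ℝ → ℝ → ℝ) (Z : Ω → ℝ) (α C β T : ℝ)
    (hα : 0 < α) (hα1 : α < 1) (hC : 0 < C)
    (hβ : (1 - α) / 2 < β) (hβ1 : β < (1 + α) / 2) (hT : 0 < T)
    (hfbm : IsFBM P ξ α C)
    (hcont : ∀ ω, Continuous fun t => ξ t ω)
    (hb : ∃ B : ℝ, ∀ t₁ x₁ t₂ x₂ : ℝ,
      |b t₂ x₂ - b t₁ x₁| ≤ B * (|t₂ - t₁| + |x₂ - x₁|))
    (hσdt : ∀ t x : ℝ, HasDerivAt (fun u => σ u x) (σt t x) t)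
    (hσdx : ∀ t x : ℝ, HasDerivAt (fun y => σ t y) (σx t x) x)
    (hσtc : Continuous fun p : ℝ × ℝ => σt p.1 p.2)
    (hσxc : Continuous fun p : ℝ × ℝ => σx p.1 p.2)
    (hσ : ∃ S : ℝ, ∀ t₁ x₁ t₂ x₂ : ℝ,
      |σ t₂ x₂ - σ t₁ x₁| ≤ S * (|t₂ - t₁| + |x₂ - x₁|) ∧
      |σt t₂ x₂ - σt t₁ x₁| ≤ S * (|t₂ - t₁| + |x₂ - x₁|) ∧
      |σx t₂ x₂ - σx t₁ x₁| ≤ S * (|t₂ - t₁| + |x₂ - x₁|)) :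
    ∀ᵐ ω ∂P,
      (∃ x : ℝ → ℝ, IsPathwiseSolution b σ ξ Z T β ω x) ∧
      (∀ x y : ℝ → ℝ, IsPathwiseSolution b σ ξ Z T β ω x →
        IsPathwiseSolution b σ ξ Z T β ω y → EqOn x y (Icc 0 T)) := by
  obtain ⟨B, hB⟩ := hb
  obtain ⟨S, hS⟩ := hσ
  exact fbm_sde_existence_uniqueness_general P ξ b σ σx Z ((1 + α) / 2) β T (by linarith)
    (by linarith) hβ1 hT (fun p hp ↦ (hfbm.exists_isKolmogorovProcess (by linarith) hp).imp
      fun _ hM ↦ hM T) (.of_forall fun ω ↦ (hcont ω).continuousOn) ⟨B, hB⟩ hσdx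
    ⟨S, fun t₁ x₁ t₂ x₂ ↦ (hS t₁ x₁ t₂ x₂).1⟩ ⟨S, fun t₁ x₁ t₂ x₂ ↦ (hS t₁ x₁ t₂ x₂).2.2⟩
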